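/- Let r be a positive integer, let ψ be the distribution degenerate at r, let 𝒢=(V,E,λ) be a sample from Γ_{[n]}(ψ), and let 𝒢^O be its order discretization. Then for any constant β>0, with probability tending to 1 as n→∞, Double(𝒢^O) ≤ (1+β)·n·log n. -/

import Mathlib

open MeasureTheory ProbabilityTheory Filter Set
open scoped ENNReal NNReal Topology

noncomputable section

namespace RTG

/-- A temporal graph on vertex type `V`, given by the finite set of real time labels
attached to each potential edge (unordered pair of vertices). -/
abbrev TGraph (V : Type*) := Sym2 V → Finset ℝ

/-- `P` is a strict partial order supported on the set `s`. -/
def StrictPartialOrderOn {α : Type*} (s : Set α) (P : α → α → Prop) : Prop :=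
  (∀ a, ¬ P a a) ∧ (∀ a b c, P a b → P b c → P a c) ∧ ∀ a b, P a b → a ∈ s ∧ b ∈ s

/-- The temporal graph `Λ` contains `(H, P)` as a `δ`-temporal motif. -/
def Contains {VH V : Type*} (H : SimpleGraph VH) (P : Sym2 VH → Sym2 VH → Prop)
    (Λ : TGraph V) (δ : ℝ) : Prop :=
  ∃ Φ : VH → V, Function.Injective Φ ∧
    ∃ lab : Sym2 VH → ℝ,
      (∀ e ∈ H.edgeSet, lab e ∈ Λ (Sym2.map Φ e)) ∧
      (∀ e f, P e f → lab e < lab f) ∧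
      (∀ e ∈ H.edgeSet, ∀ f ∈ H.edgeSet, lab e - lab f < δ)

/-- The sparsity `ρ_H` of a graph `H`: the minimum over subgraphs with at least two
edges of `|V_I| / (|E_I| - 1)`. -/
def sparsity {VH : Type*} (H : SimpleGraph VH) : ℝ :=
  sInf {x : ℝ | ∃ I : H.Subgraph, 2 ≤ I.edgeSet.ncard ∧
    x = (I.verts.ncard : ℝ) / ((I.edgeSet.ncard : ℝ) - 1)}

/-- The space of label data on a single edge: a number `k` of labels together with the
tuple of `k` label values (indexed in order of sampling). -/
abbrev LabelSpace := Σ k : ℕ, Fin k → ℝ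

/-- The uniform distribution on `(0, 1]`. -/
def unif01 : Measure ℝ := volume.restrict (Set.Ioc 0 1)

/-- The uniform distribution on `{1, …, T}` (as a measure on `ℝ`). -/
def unifDisc (T : ℕ) : Measure ℝ :=
  (T : ℝ≥0∞)⁻¹ • ∑ k ∈ Finset.Icc 1 T, Measure.dirac (k : ℝ)

/-- The distribution of the label data of a single edge: the number of labels is drawn
according to `ψ` and, independently, each label value is drawn according to `ν`. -/
def edgeMeasure (ν : Measure ℝ) (ψ : Measure ℕ) : Measure LabelSpace :=
  Measure.sum fun k => ψ {k} • (Measure.pi fun _ : Fin k => ν).map (Sigma.mk k)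

/-- The doubly random temporal graph model on vertex set `V` with label value
distribution `ν` and label multiplicity distribution `ψ`: all edges receive independent
identically distributed label data. -/
def model (V : Type*) [Fintype V] [DecidableEq V] (ν : Measure ℝ) (ψ : Measure ℕ) :
    Measure (Sym2 V → LabelSpace) :=
  Measure.pi fun _ : Sym2 V => edgeMeasure ν ψ

/-- The continuous doubly random temporal graph `Γ_V(ψ)`. -/
abbrev contModel (V : Type*) [Fintype V] [DecidableEq V] (ψ : Measure ℕ) :
    Measure (Sym2 V → LabelSpace) := model V unif01 ψ

/-- The discrete doubly random temporal graph `Γ_V(ψ, T)`. -/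
abbrev discModel (V : Type*) [Fintype V] [DecidableEq V] (ψ : Measure ℕ) (T : ℕ) :
    Measure (Sym2 V → LabelSpace) := model V (unifDisc T) ψ

/-- The temporal graph determined by a sample `ω` of the model: each non-loop edge
carries the sampled set of labels. -/
def toTGraph {V : Type*} [DecidableEq V] (ω : Sym2 V → LabelSpace) : TGraph V :=
  fun e => if e.IsDiag then ∅ else Finset.image (ω e).2 Finset.univ

/-- The `T`-discretization of a temporal graph: each label `l` is replaced by `⌈T·l⌉`. -/
def discretize {V : Type*} (T : ℕ) (Λ : TGraph V) : TGraph V :=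
  fun e => (Λ e).image fun l => ((⌈(T : ℝ) * l⌉ : ℤ) : ℝ)

/-- `ψ` is a label multiplicity distribution: a probability distribution on `ℕ` with
positive finite mean and finite second moment. -/
def IsLMD (ψ : Measure ℕ) : Prop :=
  IsProbabilityMeasure ψ ∧ Integrable (fun k : ℕ => (k : ℝ)) ψ ∧
    Integrable (fun k : ℕ => (k : ℝ) ^ 2) ψ ∧ 0 < ∫ k, (k : ℝ) ∂ψ

/-- The mean `r` of a label multiplicity distribution. -/
def lmdMean (ψ : Measure ℕ) : ℝ := ∫ k, (k : ℝ) ∂ψ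

/-- The second moment `r₂` of a label multiplicity distribution. -/
def lmdSq (ψ : Measure ℕ) : ℝ := ∫ k, (k : ℝ) ^ 2 ∂ψ

/-- `q = P[Q > 0]` for a label multiplicity distribution. -/
def lmdPos (ψ : Measure ℕ) : ℝ := (ψ {k | 0 < k}).toReal

/-- `v` is reachable from the set `S` by time `t` in the temporal graph `Λ`. -/
def ReachBy {V : Type*} (Λ : TGraph V) (S : Set V) (t : ℝ) (v : V) : Prop :=
  v ∈ S ∨ ∃ (k : ℕ) (f : ℕ → V) (ts : ℕ → ℝ), 0 < k ∧ f 0 ∈ S ∧ f k = v ∧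
    (∀ i < k, ts i ∈ Λ s(f i, f (i + 1))) ∧
    (∀ i j, i < j → j < k → ts i < ts j) ∧ ts (k - 1) ≤ t

/-- The reachability ball `B_Λ(S, t)`. -/
def ball {V : Type*} (Λ : TGraph V) (S : Set V) (t : ℝ) : Set V := {v | ReachBy Λ S t v}

/-- The doubling time of the set `S` in `Λ` (with value `∞` if the reachability ball
never doubles in size). -/
def doubleTime {V : Type*} (Λ : TGraph V) (S : Set V) : ℝ≥0∞ :=
  ⨅ (t : ℝ) (_ : 0 ≤ t ∧ 2 * S.ncard ≤ (ball Λ S t).ncard), ENNReal.ofReal t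

/-- The doubling time of the temporal graph `Λ`: the maximum doubling time over all
nonempty vertex sets of size at most half the number of vertices. -/
def doubleAll {V : Type*} [Fintype V] (Λ : TGraph V) : ℝ≥0∞ :=
  ⨆ (S : Set V) (_ : S.Nonempty ∧ 2 * S.ncard ≤ Fintype.card V), doubleTime Λ S

/-- `Double⁻`: the maximum doubling time over nonempty sets of size at most `n/4`. -/
def doubleSmall {V : Type*} [Fintype V] (Λ : TGraph V) : ℝ≥0∞ :=
  ⨆ (S : Set V) (_ : S.Nonempty ∧ 4 * S.ncard ≤ Fintype.card V), doubleTime Λ S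

/-- `Double⁺`: the maximum doubling time over sets of size in `(n/4, n/2]`. -/
def doubleLarge {V : Type*} [Fintype V] (Λ : TGraph V) : ℝ≥0∞ :=
  ⨆ (S : Set V) (_ : Fintype.card V < 4 * S.ncard ∧ 2 * S.ncard ≤ Fintype.card V),
    doubleTime Λ S

/-- The partial reversal `ℛ(Λ, t)`: every label `l < t` is replaced by `t - l`. -/
def reverse {V : Type*} (Λ : TGraph V) (t : ℝ) : TGraph V :=
  fun e => (Λ e).image fun l => if l < t then t - l else l

/-- The rank of a time `x` among all the labels of the sample `ω`: the number of labels
(on genuine, non-loop, edges) that are at most `x`. -/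
def rank {V : Type*} [Fintype V] [DecidableEq V] (ω : Sym2 V → LabelSpace) (x : ℝ) : ℕ :=
  ∑ e ∈ Finset.univ.filter (fun e : Sym2 V => ¬ e.IsDiag),
    Nat.card {i : Fin (ω e).1 // (ω e).2 i ≤ x}

/-- The order discretization `𝒢^O` of the sample `ω`: each label is replaced by its rank
among all labels. -/
def orderDisc {V : Type*} [Fintype V] [DecidableEq V] (ω : Sym2 V → LabelSpace) :
    TGraph V :=
  fun e => if e.IsDiag then ∅
    else Finset.image (fun i => (rank ω ((ω e).2 i) : ℝ)) Finset.univ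


/-! ### The slotted growth process -/

section Core

variable {V : Type} [Fintype V] [DecidableEq V] {α : Type}

open Classical in
/-- The slotted growth process: at step `i` we add every vertex joined to the current set by an
edge carrying a label in slot `i`. -/
def grow (has : α → ℕ → Prop) (ω : Sym2 V → α) (S : Finset V) : ℕ → Finset V
  | 0 => S
  | i + 1 => grow has ω S i ∪
      Finset.univ.filter (fun y => ∃ x ∈ grow has ω S i, has (ω s(x, y)) i)

lemma grow_succ (has : α → ℕ → Prop) (ω : Sym2 V → α) (S : Finset V) (i : ℕ) (y : V) :
    y ∈ grow has ω S (i + 1) ↔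
      y ∈ grow has ω S i ∨ ∃ x ∈ grow has ω S i, has (ω s(x, y)) i := by
  simp [grow]

lemma grow_mono (has : α → ℕ → Prop) (ω : Sym2 V → α) (S : Finset V) :
    Monotone (grow has ω S) := by
  apply monotone_nat_of_le_succ
  intro i y hy
  rw [grow_succ]
  exact Or.inl hy

lemma grow_congr (has : α → ℕ → Prop) (ω ω' : Sym2 V → α) (S : Finset V) (i : ℕ)
    (h : ∀ e, ω e = ω' e ∨ ∀ j < i, (∃ x ∈ e, x ∈ grow has ω S j) →
      ¬ has (ω e) j ∧ ¬ has (ω' e) j) :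
    ∀ j ≤ i, grow has ω' S j = grow has ω S j := by
  intro j
  induction j with
  | zero => intro _; rfl
  | succ j ih =>
    intro hj
    have ih' := ih (by omega)
    ext y
    rw [grow_succ, grow_succ, ih']
    refine or_congr Iff.rfl (exists_congr fun x => and_congr_right fun hx => ?_)
    rcases h s(x, y) with h1 | h1
    · rw [h1]
    · have := h1 j (by omega) ⟨x, by simp, hx⟩
      tauto

/-- The edges between `A` and its complement. -/
def cut (A : Finset V) : Finset (Sym2 V) := (A ×ˢ Aᶜ).image (fun p => s(p.1, p.2))

lemma mem_cut (A : Finset V) (e : Sym2 V) :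
    e ∈ cut A ↔ ∃ x ∈ A, ∃ y, y ∉ A ∧ e = s(x, y) := by
  simp only [cut, Finset.mem_image, Finset.mem_product, Finset.mem_compl, Prod.exists]
  constructor
  · rintro ⟨x, y, ⟨hx, hy⟩, rfl⟩; exact ⟨x, hx, y, hy, rfl⟩
  · rintro ⟨x, hx, y, hy, rfl⟩; exact ⟨x, y, ⟨hx, hy⟩, rfl⟩

lemma card_cut (A : Finset V) : (cut A).card = A.card * (Fintype.card V - A.card) := by
  rw [cut, Finset.card_image_of_injOn, Finset.card_product, Finset.card_compl]
  rintro ⟨x, y⟩ h ⟨x', y'⟩ h' heq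
  simp only [Finset.coe_product, Set.mem_prod, Finset.mem_coe, Finset.mem_compl] at h h'
  simp only [Sym2.eq_iff] at heq
  rcases heq with ⟨rfl, rfl⟩ | ⟨rfl, rfl⟩
  · rfl
  · exact absurd h.1 h'.2

variable [Finite α] [MeasurableSpace α] [MeasurableSingletonClass α]

/-- Independence of a box over `C` and an event not looking at `C`. -/
lemma pi_real_inter {ι : Type} [Fintype ι] [DecidableEq ι] (ν : Measure α) [IsProbabilityMeasure ν]
    (C : Finset ι) (a₀ : α) (E : Set (ι → α)) (Q : ι → Set α) :
    (Measure.pi fun _ : ι => ν).real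
      ({ω | (fun e => if e ∈ C then a₀ else ω e) ∈ E} ∩ {ω | ∀ e ∈ C, ω e ∈ Q e}) =
    (Measure.pi fun _ : ι => ν).real {ω | (fun e => if e ∈ C then a₀ else ω e) ∈ E} *
      ∏ e ∈ C, ν.real (Q e) := by
  classical
  have mp := measurePreserving_piEquivPiSubtypeProd (fun _ : ι => ν) (fun e => e ∈ C)
  set φ := MeasurableEquiv.piEquivPiSubtypeProd (fun _ : ι => α) (fun e => e ∈ C) with hφ
  set E' : Set ({e // ¬ e ∈ C} → α) :=
    {u | (fun e => if h : e ∈ C then a₀ else u ⟨e, h⟩) ∈ E} with hE'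
  have hE : {ω : ι → α | (fun e => if e ∈ C then a₀ else ω e) ∈ E} =
      φ ⁻¹' (Set.univ ×ˢ E') := by
    ext ω
    simp only [hE', Set.mem_ofPred_eq, Set.mem_preimage, Set.mem_prod, Set.mem_univ, true_and]
    rfl
  have hB : {ω : ι → α | ∀ e ∈ C, ω e ∈ Q e} =
      φ ⁻¹' ((Set.univ.pi fun e : {e // e ∈ C} => Q e) ×ˢ Set.univ) := by
    ext ω
    simp only [Set.mem_ofPred_eq, Set.mem_preimage, Set.mem_prod, Set.mem_univ, and_true,
      Set.mem_pi, Subtype.forall, forall_true_left]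
    rfl
  rw [hE, hB, ← Set.preimage_inter, Set.prod_inter_prod, Set.univ_inter, Set.inter_univ]
  have ms : ∀ s : Set (({e // e ∈ C} → α) × ({e // ¬ e ∈ C} → α)), MeasurableSet s :=
    fun s => s.toFinite.measurableSet
  rw [mp.measureReal_preimage (ms _).nullMeasurableSet,
    mp.measureReal_preimage (ms _).nullMeasurableSet, measureReal_prod_prod, measureReal_prod_prod]
  simp only [probReal_univ, one_mul]
  rw [mul_comm]
  congr 1
  rw [Finset.prod_subtype C (p := fun e => e ∈ C) (fun _ => Iff.rfl) (fun e => ν.real (Q e))]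
  rw [measureReal_def, @Measure.pi_pi _ _ (Subtype.fintype _) _ _ _ _, ENNReal.toReal_prod]
  rfl

lemma stay_bound (ν : Measure α) [IsProbabilityMeasure ν] (has : α → ℕ → Prop) (a₀ : α)
    (ha₀ : ∀ j, ¬ has a₀ j) (M : ℕ) (q : ℝ) (hq0 : 0 ≤ q)
    (hq : ∀ (J : Finset ℕ) (i : ℕ), i < M → i ∉ J → J ⊆ Finset.range M →
      ν.real {a | ∀ j ∈ insert i J, ¬ has a j} ≤ q * ν.real {a | ∀ j ∈ J, ¬ has a j})
    (S : Finset V) (i : ℕ) (hi : i < M) (ω₀ : Sym2 V → α) :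
    (Measure.pi fun _ : Sym2 V => ν).real {ω | (∀ j ≤ i, grow has ω S j = grow has ω₀ S j) ∧
        grow has ω S (i + 1) = grow has ω S i} ≤
      q ^ ((grow has ω₀ S i).card * (Fintype.card V - (grow has ω₀ S i).card)) *
      (Measure.pi fun _ : Sym2 V => ν).real {ω | ∀ j ≤ i, grow has ω S j = grow has ω₀ S j} := by
  classical
  set A := grow has ω₀ S i with hA
  set C := cut A with hC
  set J : Sym2 V → Finset ℕ := fun e =>
    (Finset.range i).filter (fun j => ∃ x ∈ e, x ∈ grow has ω₀ S j) with hJ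
  set E : Set (Sym2 V → α) := {ω | ∀ j ≤ i, grow has ω S j = grow has ω₀ S j} with hE
  set μ := (Measure.pi fun _ : Sym2 V => ν) with hμ
  have hbox : ∀ ω ∈ E, ∀ e ∈ C, ∀ j ∈ J e, ¬ has (ω e) j := by
    intro ω hω e he j hj hh
    obtain ⟨x, hx, y, hy, rfl⟩ := (mem_cut _ _).1 he
    simp only [hJ, Finset.mem_filter, Finset.mem_range, Sym2.mem_iff] at hj
    obtain ⟨hji, z, hz, hzj⟩ := hj
    have hmono : grow has ω₀ S j ⊆ A := grow_mono has ω₀ S hji.le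
    rcases hz with rfl | rfl
    · have : y ∈ grow has ω S (j + 1) := by
        rw [grow_succ]
        right
        exact ⟨z, by rw [hω j hji.le]; exact hzj, hh⟩
      rw [hω (j + 1) (by omega)] at this
      exact hy (grow_mono has ω₀ S (show j + 1 ≤ i by omega) this)
    · exact hy (hmono hzj)
  have h1 : E = {ω | (fun e => if e ∈ C then a₀ else ω e) ∈ E} ∩
      {ω | ∀ e ∈ C, ω e ∈ {a | ∀ j ∈ J e, ¬ has a j}} := by
    ext ω
    constructor
    · intro hω
      refine ⟨?_, hbox ω hω⟩
      intro j hj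
      rw [← hω j hj]
      refine grow_congr has ω _ S i ?_ j hj
      intro e
      by_cases he : e ∈ C
      · right
        intro j hj hx
        have := hbox ω hω e he j (by
          simp only [hJ, Finset.mem_filter, Finset.mem_range]
          refine ⟨hj, ?_⟩
          rwa [hω j hj.le] at hx)
        simp [he, this, ha₀]
      · left; simp [he]
    · rintro ⟨h1, h2⟩ j hj
      rw [← h1 j hj]
      refine grow_congr has _ ω S i ?_ j hj
      intro e
      by_cases he : e ∈ C
      · right
        intro j hj hx
        have := h2 e he j (by
          simp only [hJ, Finset.mem_filter, Finset.mem_range]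
          refine ⟨hj, ?_⟩
          rwa [h1 j hj.le] at hx)
        simp [he, this, ha₀]
      · left; simp [he]
  have h2 : {ω | (∀ j ≤ i, grow has ω S j = grow has ω₀ S j) ∧
        grow has ω S (i + 1) = grow has ω S i} ⊆
      {ω | (fun e => if e ∈ C then a₀ else ω e) ∈ E} ∩
      {ω | ∀ e ∈ C, ω e ∈ {a | ∀ j ∈ insert i (J e), ¬ has a j}} := by
    rintro ω ⟨hω, hstay⟩
    have hω' : ω ∈ E := hω
    rw [h1] at hω'
    refine ⟨hω'.1, ?_⟩
    intro e he j hj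
    rcases Finset.mem_insert.1 hj with rfl | hj
    · intro hh
      obtain ⟨x, hx, y, hy, rfl⟩ := (mem_cut _ _).1 he
      have : y ∈ grow has ω S (j + 1) := by
        rw [grow_succ]
        right
        exact ⟨x, by rw [hω j le_rfl]; exact hx, hh⟩
      rw [hstay, hω j le_rfl] at this
      exact hy this
    · exact hω'.2 e he j hj
  calc μ.real _ ≤ μ.real _ := measureReal_mono h2
    _ = μ.real {ω | (fun e => if e ∈ C then a₀ else ω e) ∈ E} *
        ∏ e ∈ C, ν.real {a | ∀ j ∈ insert i (J e), ¬ has a j} :=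
      pi_real_inter ν C a₀ E _
    _ ≤ μ.real {ω | (fun e => if e ∈ C then a₀ else ω e) ∈ E} *
        ∏ e ∈ C, (q * ν.real {a | ∀ j ∈ J e, ¬ has a j}) := by
      gcongr with e he
      apply hq _ _ hi
      · simp [hJ]
      · intro j hj
        simp only [hJ, Finset.mem_filter, Finset.mem_range] at hj ⊢
        omega
    _ = q ^ C.card * (μ.real {ω | (fun e => if e ∈ C then a₀ else ω e) ∈ E} *
        ∏ e ∈ C, ν.real {a | ∀ j ∈ J e, ¬ has a j}) := by
      rw [Finset.prod_mul_distrib, Finset.prod_const]; ring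
    _ = q ^ (A.card * (Fintype.card V - A.card)) * μ.real E := by
      rw [← pi_real_inter ν C a₀ E, ← h1, hC, card_cut]

lemma grow_step (ν : Measure α) [IsProbabilityMeasure ν] (has : α → ℕ → Prop) (a₀ : α)
    (ha₀ : ∀ j, ¬ has a₀ j) (M : ℕ) (q : ℝ) (hq0 : 0 ≤ q)
    (hq : ∀ (J : Finset ℕ) (i : ℕ), i < M → i ∉ J → J ⊆ Finset.range M →
      ν.real {a | ∀ j ∈ insert i J, ¬ has a j} ≤ q * ν.real {a | ∀ j ∈ J, ¬ has a j})
    (S : Finset V) (g : ℕ → ℝ) (hg : AntitoneOn g (Set.Ici S.card))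
    (ρ : ℝ) (hρ : ∀ j, S.card ≤ j → j ≤ Fintype.card V →
      q ^ (j * (Fintype.card V - j)) * g j + (1 - q ^ (j * (Fintype.card V - j))) * g (j + 1)
        ≤ ρ * g j)
    (i : ℕ) (hi : i < M) :
    ∫ ω, g (grow has ω S (i + 1)).card ∂(Measure.pi fun _ : Sym2 V => ν) ≤
      ρ * ∫ ω, g (grow has ω S i).card ∂(Measure.pi fun _ : Sym2 V => ν) := by
  classical
  have : Fintype α := Fintype.ofFinite α
  set μ := (Measure.pi fun _ : Sym2 V => ν) with hμ
  rw [integral_fintype Integrable.of_finite, integral_fintype Integrable.of_finite]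
  set H : (Sym2 V → α) → (Fin (i + 1) → Finset V) := fun ω j => grow has ω S j with hH
  rw [← Finset.sum_fiberwise _ H, ← Finset.sum_fiberwise _ H, Finset.mul_sum]
  apply Finset.sum_le_sum
  intro h _
  by_cases hex : ∃ ω₀, H ω₀ = h
  swap
  · rw [Finset.sum_eq_zero, Finset.sum_eq_zero]
    · simp
    · intro x hx; exact absurd ⟨x, (Finset.mem_filter.1 hx).2⟩ hex
    · intro x hx; exact absurd ⟨x, (Finset.mem_filter.1 hx).2⟩ hex
  obtain ⟨ω₀, rfl⟩ := hex
  have hHiff : ∀ ω, H ω = H ω₀ ↔ ∀ j ≤ i, grow has ω S j = grow has ω₀ S j := by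
    intro ω
    constructor
    · intro h j hj
      exact congrFun h ⟨j, by omega⟩
    · intro h
      funext j
      exact h j (by omega)
  set A := grow has ω₀ S i with hA
  set F : Finset (Sym2 V → α) := Finset.univ.filter (fun ω => H ω = H ω₀) with hF
  set F1 : Finset (Sym2 V → α) := F.filter (fun ω => grow has ω S (i + 1) = grow has ω S i) with hF1
  have hSA : S.card ≤ A.card := Finset.card_le_card (grow_mono has ω₀ S (Nat.zero_le i))
  set p := q ^ (A.card * (Fintype.card V - A.card)) with hp
  have hW : ∑ ω ∈ F, μ.real {ω} = μ.real {ω | ∀ j ≤ i, grow has ω S j = grow has ω₀ S j} := by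
    rw [sum_measureReal_singleton]; congr 1; ext ω; simp [hF, hHiff]
  have hW1 : ∑ ω ∈ F1, μ.real {ω} = μ.real {ω | (∀ j ≤ i, grow has ω S j = grow has ω₀ S j) ∧
        grow has ω S (i + 1) = grow has ω S i} := by
    rw [sum_measureReal_singleton]; congr 1; ext ω; simp [hF1, hF, hHiff]
  have hst : ∑ ω ∈ F1, μ.real {ω} ≤ p * ∑ ω ∈ F, μ.real {ω} := by
    rw [hW, hW1]
    exact stay_bound ν has a₀ ha₀ M q hq0 hq S i hi ω₀
  have hR : ∑ ω ∈ F, μ.real {ω} • g (grow has ω S i).card =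
      (∑ ω ∈ F, μ.real {ω}) * g A.card := by
    rw [Finset.sum_mul]
    apply Finset.sum_congr rfl
    intro ω hω
    have := ((hHiff ω).1 (Finset.mem_filter.1 hω).2) i le_rfl
    rw [this, smul_eq_mul]
  have hL : ∑ ω ∈ F, μ.real {ω} • g (grow has ω S (i + 1)).card ≤
      ∑ ω ∈ F, (μ.real {ω} * g (A.card + 1) +
        if grow has ω S (i + 1) = grow has ω S i then μ.real {ω} * (g A.card - g (A.card + 1))
        else 0) := by
    apply Finset.sum_le_sum
    intro ω hω
    have hAi := ((hHiff ω).1 (Finset.mem_filter.1 hω).2) i le_rfl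
    rw [smul_eq_mul]
    split_ifs with hs
    · rw [hs, hAi]
      linarith
    · have hlt : A.card + 1 ≤ (grow has ω S (i + 1)).card := by
        have hsub : grow has ω S i ⊂ grow has ω S (i + 1) :=
          (Finset.ssubset_iff_subset_ne).2 ⟨grow_mono has ω S (Nat.le_succ i), fun h => hs h.symm⟩
        have := Finset.card_lt_card hsub
        rw [hAi] at this
        exact this
      have := hg (show S.card ≤ A.card + 1 by omega)
        (show S.card ≤ (grow has ω S (i + 1)).card by omega) hlt
      have h0 : 0 ≤ μ.real {ω} := measureReal_nonneg
      rw [add_zero]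
      exact mul_le_mul_of_nonneg_left this h0
  rw [hR]
  refine hL.trans ?_
  rw [Finset.sum_add_distrib, ← Finset.sum_filter, ← Finset.sum_mul, ← Finset.sum_mul]
  have hd : 0 ≤ g A.card - g (A.card + 1) := by
    have := hg (show S.card ≤ A.card from hSA) (show S.card ≤ A.card + 1 by omega)
      (Nat.le_succ _)
    linarith
  have hρ' := hρ A.card hSA (Finset.card_le_univ A)
  have hW0 : 0 ≤ ∑ ω ∈ F, μ.real {ω} := Finset.sum_nonneg fun _ _ => measureReal_nonneg
  have e1 := mul_le_mul_of_nonneg_right hst hd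
  have e2 := mul_le_mul_of_nonneg_left hρ' hW0
  nlinarith [e1, e2]

lemma grow_tail (ν : Measure α) [IsProbabilityMeasure ν] (has : α → ℕ → Prop) (a₀ : α)
    (ha₀ : ∀ j, ¬ has a₀ j) (M : ℕ) (q : ℝ) (hq0 : 0 ≤ q)
    (hq : ∀ (J : Finset ℕ) (i : ℕ), i < M → i ∉ J → J ⊆ Finset.range M →
      ν.real {a | ∀ j ∈ insert i J, ¬ has a j} ≤ q * ν.real {a | ∀ j ∈ J, ¬ has a j})
    (S : Finset V) (g : ℕ → ℝ) (hg : AntitoneOn g (Set.Ici S.card)) (hg0 : ∀ j, S.card ≤ j → 0 ≤ g j)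
    (b : ℕ) (hgb : ∀ j, S.card ≤ j → j < b → 1 ≤ g j)
    (ρ : ℝ) (hρ0 : 0 ≤ ρ) (hρ : ∀ j, S.card ≤ j → j ≤ Fintype.card V →
      q ^ (j * (Fintype.card V - j)) * g j + (1 - q ^ (j * (Fintype.card V - j))) * g (j + 1)
        ≤ ρ * g j) :
    (Measure.pi fun _ : Sym2 V => ν).real {ω | (grow has ω S M).card < b} ≤
      ρ ^ M * g S.card := by
  have key : ∀ i ≤ M, ∫ ω, g (grow has ω S i).card ∂(Measure.pi fun _ : Sym2 V => ν) ≤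
      ρ ^ i * g S.card := by
    intro i
    induction i with
    | zero => intro _; simp [grow]
    | succ i ih =>
      intro hi
      calc _ ≤ _ := grow_step ν has a₀ ha₀ M q hq0 hq S g hg ρ hρ i (by omega)
        _ ≤ ρ * (ρ ^ i * g S.card) := mul_le_mul_of_nonneg_left (ih (by omega)) hρ0
        _ = _ := by ring
  refine le_trans ?_ (key M le_rfl)
  have hms : MeasurableSet {ω : Sym2 V → α | (grow has ω S M).card < b} :=
    (Set.toFinite _).measurableSet
  rw [← integral_indicator_one hms]
  apply integral_mono Integrable.of_finite Integrable.of_finite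
  intro ω
  by_cases h : (grow has ω S M).card < b
  · have hm : ω ∈ {ω : Sym2 V → α | (grow has ω S M).card < b} := h
    rw [Set.indicator_of_mem hm]
    exact hgb _ (Finset.card_le_card (grow_mono has ω S (Nat.zero_le M))) h
  · have hm : ω ∉ {ω : Sym2 V → α | (grow has ω S M).card < b} := h
    rw [Set.indicator_of_notMem hm]
    exact hg0 _ (Finset.card_le_card (grow_mono has ω S (Nat.zero_le M)))

end Core

section Core2

variable {V : Type} [Fintype V] [DecidableEq V] {α : Type}
variable [Finite α] [MeasurableSpace α] [MeasurableSingletonClass α]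

/-- The product weight appearing in the exponential moment bound. -/
def wt (n a b : ℕ) (ε : ℝ) : ℝ :=
  ∏ l ∈ Finset.Ico a b, (1 - (1 - ε) * (a * ((n : ℝ) - a)) / (l * ((n : ℝ) - l)))⁻¹

lemma grow_tail2 (ν : Measure α) [IsProbabilityMeasure ν] (has : α → ℕ → Prop) (a₀ : α)
    (ha₀ : ∀ j, ¬ has a₀ j) (M : ℕ) (q : ℝ) (hq0 : 0 ≤ q)
    (hq : ∀ (J : Finset ℕ) (i : ℕ), i < M → i ∉ J → J ⊆ Finset.range M →
      ν.real {a | ∀ j ∈ insert i J, ¬ has a j} ≤ q * ν.real {a | ∀ j ∈ J, ¬ has a j})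
    (κ : ℝ) (hκ0 : 0 ≤ κ) (hqκ : q ≤ Real.exp (-κ))
    (n a b : ℕ) (hn : Fintype.card V = n) (ha : 0 < a) (hab : a < b) (hbn : b ≤ n)
    (hmin : ∀ j, a ≤ j → j < b → (a : ℝ) * ((n : ℝ) - a) ≤ j * ((n : ℝ) - j))
    (ε : ℝ) (hε0 : 0 < ε) (hε1 : ε < 1) (hκn : κ * (n : ℝ) ^ 2 ≤ ε)
    (S : Finset V) (hS : S.card = a) :
    (Measure.pi fun _ : Sym2 V => ν).real {ω | (grow has ω S M).card < b} ≤
      wt n a b ε * Real.exp (-((1 - ε) ^ 2 * (κ * M) * (a * ((n : ℝ) - a)))) := by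
  set L₀ : ℝ := a * ((n : ℝ) - a) with hL₀
  have hanR : (a : ℝ) < n := by exact_mod_cast (lt_of_lt_of_le hab hbn)
  have haR : (0 : ℝ) < a := by exact_mod_cast ha
  have hL₀pos : 0 < L₀ := mul_pos haR (by linarith)
  have hLle : ∀ j : ℕ, j ≤ n → (j : ℝ) * ((n : ℝ) - j) ≤ (n : ℝ) ^ 2 := by
    intro j hj
    have h1 : (j : ℝ) ≤ n := by exact_mod_cast hj
    have h2 : (0 : ℝ) ≤ j := by positivity
    nlinarith
  set x : ℕ → ℝ := fun l => (1 - ε) * L₀ / (l * ((n : ℝ) - l)) with hx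
  have hx0 : ∀ l, a ≤ l → l < b → 0 ≤ x l := by
    intro l h1 h2
    have := hmin l h1 h2
    exact div_nonneg (mul_nonneg (by linarith) hL₀pos.le) (by linarith)
  have hx1 : ∀ l, a ≤ l → l < b → x l ≤ 1 - ε := by
    intro l h1 h2
    have := hmin l h1 h2
    simp only [hx]
    rw [div_le_iff₀ (by linarith)]
    exact mul_le_mul_of_nonneg_left this (by linarith)
  set g : ℕ → ℝ := fun j => if j < b then ∏ l ∈ Finset.Ico j b, (1 - x l)⁻¹ else 0 with hg
  have hfac : ∀ l, a ≤ l → l < b → 1 ≤ (1 - x l)⁻¹ := by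
    intro l h1 h2
    have := hx0 l h1 h2
    have := hx1 l h1 h2
    exact (one_le_inv₀ (by linarith)).2 (by linarith)
  have hg1 : ∀ j, a ≤ j → j < b → 1 ≤ g j := by
    intro j h1 h2
    simp only [hg, h2, if_true]
    apply Finset.one_le_prod
    intro l hl
    rw [Finset.mem_Ico] at hl
    exact hfac l (by omega) hl.2
  have hg0 : ∀ j, a ≤ j → 0 ≤ g j := by
    intro j h1
    by_cases h2 : j < b
    · linarith [hg1 j h1 h2]
    · simp [hg, h2]
  have hgs : ∀ j, a ≤ j → j < b → g (j + 1) ≤ (1 - x j) * g j := by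
    intro j h1 h2
    have e1 := hx0 j h1 h2
    have e2 := hx1 j h1 h2
    by_cases h3 : j + 1 < b
    · simp only [hg, h2, h3, if_true]
      rw [Finset.prod_eq_prod_Ico_succ_bot h2, ← mul_assoc, mul_inv_cancel₀ (by linarith), one_mul]
    · have : g (j + 1) = 0 := by simp [hg, h3]
      rw [this]
      exact mul_nonneg (by linarith) (hg0 j h1)
  have hanti : AntitoneOn g (Set.Ici S.card) := by
    rw [hS]
    have hstep : ∀ j, a ≤ j → g (j + 1) ≤ g j := by
      intro j h1
      by_cases h2 : j < b
      · have := hgs j h1 h2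
        have := hx0 j h1 h2
        have := hg0 j h1
        nlinarith
      · have e1 : g (j + 1) = 0 := by simp [hg, show ¬ (j + 1 < b) by omega]
        rw [e1]; exact hg0 j h1
    intro i hi j _ hij
    have hi' : a ≤ i := hi
    induction j, hij using Nat.le_induction with
    | base => exact le_rfl
    | succ j hj ih => exact (hstep j (by omega)).trans (ih (show a ≤ j by omega))
  set ρ : ℝ := 1 - (1 - ε) ^ 2 * κ * L₀ with hρdef
  have hκL0 : κ * L₀ ≤ ε := by
    have := hLle a (by omega)
    have := mul_le_mul_of_nonneg_left this hκ0
    linarith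
  have hρ0 : 0 ≤ ρ := by
    have h1 : (1 - ε) ^ 2 ≤ 1 := by nlinarith
    have h2 : 0 ≤ κ * L₀ := mul_nonneg hκ0 hL₀pos.le
    nlinarith
  have hρ : ∀ j, S.card ≤ j → j ≤ Fintype.card V →
      q ^ (j * (Fintype.card V - j)) * g j + (1 - q ^ (j * (Fintype.card V - j))) * g (j + 1)
        ≤ ρ * g j := by
    rw [hS, hn]
    intro j hj hjn
    by_cases hjb : j < b
    swap
    · have e1 : g (j + 1) = 0 := by simp [hg, show ¬ (j + 1 < b) by omega]
      have e2 : g j = 0 := by simp [hg, hjb]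
      rw [e1, e2]; simp
    set p := q ^ (j * (n - j)) with hp
    set u : ℝ := κ * (j * ((n : ℝ) - j)) with hu
    have hjpos : 0 < (j : ℝ) * ((n : ℝ) - j) := lt_of_lt_of_le hL₀pos (hmin j hj hjb)
    have hu0 : 0 ≤ u := mul_nonneg hκ0 hjpos.le
    have huε : u ≤ ε := le_trans (mul_le_mul_of_nonneg_left (hLle j hjn) hκ0) hκn
    have hpe : p ≤ Real.exp (-u) := by
      calc p ≤ Real.exp (-κ) ^ (j * (n - j)) := by
            rw [hp]; exact pow_le_pow_left₀ hq0 hqκ _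
        _ = Real.exp (-u) := by
            rw [← Real.exp_nat_mul]
            congr 1
            push_cast [Nat.cast_sub hjn]
            rw [hu]; ring
    have hexp : Real.exp (-u) ≤ 1 - u + u ^ 2 := by
      have h1 : 1 + u ≤ Real.exp u := by linarith [Real.add_one_le_exp u]
      rw [Real.exp_neg]
      calc (Real.exp u)⁻¹ ≤ (1 + u)⁻¹ := inv_anti₀ (by linarith) h1
        _ ≤ 1 - u + u ^ 2 := by
          rw [inv_le_iff_one_le_mul₀ (by linarith)]
          nlinarith [pow_nonneg hu0 3]
    have h1p : (1 - ε) * u ≤ 1 - p := by nlinarith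
    have hp1 : 0 ≤ 1 - p := le_trans (mul_nonneg (by linarith) hu0) h1p
    have hxu : (1 - ε) * u * x j = (1 - ε) ^ 2 * κ * L₀ := by
      simp only [hx, hu]
      have := hjpos.ne'
      generalize (j : ℝ) * ((n : ℝ) - j) = w at this ⊢
      field_simp
    have hgj := hg0 j hj
    have hgss := mul_le_mul_of_nonneg_left (hgs j hj hjb) hp1
    have hxx := mul_le_mul_of_nonneg_right h1p (hx0 j hj hjb)
    have h3 := mul_le_mul_of_nonneg_right hxx hgj
    rw [hxu] at h3
    calc p * g j + (1 - p) * g (j + 1) ≤ p * g j + (1 - p) * ((1 - x j) * g j) := by linarith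
      _ = g j - (1 - p) * x j * g j := by ring
      _ ≤ g j - (1 - ε) ^ 2 * κ * L₀ * g j := by linarith
      _ = ρ * g j := by rw [hρdef]; ring
  have main := grow_tail ν has a₀ ha₀ M q hq0 hq S g hanti (by rw [hS]; exact hg0) b
    (by rw [hS]; exact hg1) ρ hρ0 hρ
  refine main.trans ?_
  have hgS : g S.card = wt n a b ε := by
    rw [hS]; simp only [hg, hab, if_true, wt, hx, hL₀]
  have hwt0 : 0 ≤ wt n a b ε := by rw [← hgS, hS]; exact hg0 a le_rfl
  rw [hgS, mul_comm]
  apply mul_le_mul_of_nonneg_left _ hwt0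
  have hρe : ρ ≤ Real.exp (-((1 - ε) ^ 2 * κ * L₀)) := by
    have := Real.add_one_le_exp (-((1 - ε) ^ 2 * κ * L₀))
    rw [hρdef]; linarith
  calc ρ ^ M ≤ Real.exp (-((1 - ε) ^ 2 * κ * L₀)) ^ M := pow_le_pow_left₀ hρ0 hρe _
    _ = _ := by rw [← Real.exp_nat_mul]; congr 1; ring

end Core2

/-! ### The single edge law -/

lemma measurable_sigma_mk (r : ℕ) :
    Measurable (fun x : Fin r → ℝ => (⟨r, x⟩ : LabelSpace)) := by
  intro s hs
  have := (MeasurableSpace.measurableSet_iInf.1 hs) r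
  exact this

lemma measurableSet_labelSpace (s : Set LabelSpace)
    (h : ∀ k, MeasurableSet {x : Fin k → ℝ | (⟨k, x⟩ : LabelSpace) ∈ s}) : MeasurableSet s :=
  MeasurableSpace.measurableSet_iInf.2 fun k => h k

lemma edgeMeasure_dirac (ν : Measure ℝ) (r : ℕ) :
    edgeMeasure ν (Measure.dirac r) =
      (Measure.pi fun _ : Fin r => ν).map (fun x => (⟨r, x⟩ : LabelSpace)) := by
  ext s hs
  rw [edgeMeasure, Measure.sum_apply _ hs, tsum_eq_single r]
  · simp
  · intro k hk
    simp [hk.symm]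

instance : IsProbabilityMeasure unif01 := ⟨by simp [unif01]⟩

instance (r : ℕ) : IsProbabilityMeasure (edgeMeasure unif01 (Measure.dirac r)) := by
  rw [edgeMeasure_dirac]
  exact Measure.isProbabilityMeasure_map (measurable_sigma_mk r).aemeasurable

instance (V : Type) [Fintype V] [DecidableEq V] (r : ℕ) :
    IsProbabilityMeasure (contModel V (Measure.dirac r)) := by
  unfold contModel model; infer_instance

/-- The edge data `ℓ` has a label in slot `j`. -/
def hasLab (J : ℕ → Set ℝ) (l : LabelSpace) (j : ℕ) : Prop := ∃ i, l.2 i ∈ J j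

lemma measurableSet_hasLab (J : ℕ → Set ℝ) (hJ : ∀ j, MeasurableSet (J j)) (j : ℕ) :
    MeasurableSet {l | hasLab J l j} := by
  apply measurableSet_labelSpace
  intro k
  have : {x : Fin k → ℝ | (⟨k, x⟩ : LabelSpace) ∈ {l | hasLab J l j}} =
      ⋃ i, (fun x : Fin k → ℝ => x i) ⁻¹' J j := by
    ext x; simp [hasLab]
  rw [this]
  exact MeasurableSet.iUnion fun i => measurable_pi_apply i (hJ j)

lemma edge_avoid (r : ℕ) (J : ℕ → Set ℝ) (hJ : ∀ j, MeasurableSet (J j)) (s : Finset ℕ) (h : ℝ)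
    (hdisj : (s : Set ℕ).PairwiseDisjoint J) (hh : ∀ j ∈ s, unif01.real (J j) = h) :
    (edgeMeasure unif01 (Measure.dirac r)).real {l | ∀ j ∈ s, ¬ hasLab J l j} =
      (1 - s.card * h) ^ r := by
  have hms : MeasurableSet {l | ∀ j ∈ s, ¬ hasLab J l j} := by
    have : {l | ∀ j ∈ s, ¬ hasLab J l j} = ⋂ j ∈ s, {l | hasLab J l j}ᶜ := by
      ext l; simp
    rw [this]
    exact Finset.measurableSet_biInter s fun j _ => (measurableSet_hasLab J hJ j).compl
  rw [edgeMeasure_dirac, map_measureReal_apply (measurable_sigma_mk r) hms]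
  have : (fun x : Fin r → ℝ => (⟨r, x⟩ : LabelSpace)) ⁻¹' {l | ∀ j ∈ s, ¬ hasLab J l j} =
      Set.univ.pi fun _ => (⋃ j ∈ s, J j)ᶜ := by
    ext x
    simp only [hasLab, Set.mem_preimage, Set.mem_ofPred_eq, Set.mem_pi, Set.mem_univ,
      forall_true_left, Set.mem_compl_iff, Set.mem_iUnion, not_exists]
    constructor
    · intro hx i j hj; exact hx j hj i
    · intro hx j hj i; exact hx i j hj
  rw [this, measureReal_def, Measure.pi_pi, ENNReal.toReal_prod]
  simp only [Finset.prod_const, Finset.card_univ, Fintype.card_fin]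
  congr 1
  rw [← measureReal_def, probReal_compl_eq_one_sub (Finset.measurableSet_biUnion s fun j _ => hJ j),
    measureReal_biUnion_finset hdisj (fun j _ => hJ j), Finset.sum_congr rfl hh]
  simp

lemma grow_map {V : Type} [Fintype V] [DecidableEq V] {α β : Type} (has : α → ℕ → Prop)
    (has' : β → ℕ → Prop) (d : α → β) (M : ℕ) (hd : ∀ a, ∀ j < M, has' (d a) j ↔ has a j)
    (ω : Sym2 V → α) (S : Finset V) : ∀ i ≤ M, grow has' (fun e => d (ω e)) S i = grow has ω S i := by
  intro i
  induction i with
  | zero => intro _; rfl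
  | succ i ih =>
    intro hi
    ext y
    rw [grow_succ, grow_succ, ih (by omega)]
    exact or_congr Iff.rfl (exists_congr fun x => and_congr_right fun _ => hd _ i (by omega))

lemma model_tail {V : Type} [Fintype V] [DecidableEq V] (r : ℕ)
    (J : ℕ → Set ℝ) (hJ : ∀ j, MeasurableSet (J j)) (M : ℕ) (hM0 : 0 < M) (h : ℝ)
    (hdisj : (Finset.range M : Set ℕ).PairwiseDisjoint J)
    (hh : ∀ j < M, unif01.real (J j) = h) (h0 : 0 ≤ h) (hM : M * h ≤ 1)
    (n a b : ℕ) (hn : Fintype.card V = n) (ha : 0 < a) (hab : a < b) (hbn : b ≤ n)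
    (hmin : ∀ j, a ≤ j → j < b → (a : ℝ) * ((n : ℝ) - a) ≤ j * ((n : ℝ) - j))
    (ε : ℝ) (hε0 : 0 < ε) (hε1 : ε < 1) (hκn : r * h * (n : ℝ) ^ 2 ≤ ε)
    (S : Finset V) (hS : S.card = a) :
    (contModel V (Measure.dirac r)).real {ω | (grow (hasLab J) ω S M).card < b} ≤
      wt n a b ε * Real.exp (-((1 - ε) ^ 2 * (r * h * M) * (a * ((n : ℝ) - a)))) := by
  set d : LabelSpace → (Fin M → Prop) := fun l j => hasLab J l j with hd
  have hdm : Measurable d := by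
    apply measurable_pi_lambda
    intro j
    exact measurable_to_prop (by
      convert measurableSet_hasLab J hJ j using 1
      ext l; simp [hd])
  set has : (Fin M → Prop) → ℕ → Prop := fun a j => ∃ hj : j < M, a ⟨j, hj⟩ with hhas
  have hcompat : ∀ l, ∀ j < M, has (d l) j ↔ hasLab J l j := by
    intro l j hj; simp [hhas, hd, hj]
  set ν := (edgeMeasure unif01 (Measure.dirac r)).map d with hν
  have hνp : IsProbabilityMeasure ν := Measure.isProbabilityMeasure_map hdm.aemeasurable
  have hav : ∀ s : Finset ℕ, s ⊆ Finset.range M →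
      ν.real {a | ∀ j ∈ s, ¬ has a j} = (1 - s.card * h) ^ r := by
    intro s hs
    have hsM : ∀ j ∈ s, j < M := fun j hj => Finset.mem_range.1 (hs hj)
    rw [hν, map_measureReal_apply hdm (Set.toFinite _).measurableSet,
      ← edge_avoid r J hJ s h (hdisj.subset (by exact_mod_cast hs)) (fun j hj => hh j (hsM j hj))]
    congr 1
    ext l
    simp only [Set.mem_preimage, Set.mem_ofPred_eq]
    exact forall₂_congr fun j hj => not_congr (hcompat l j (hsM j hj))
  have hM1 : (1 : ℝ) ≤ M := by exact_mod_cast hM0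
  have hh1 : h ≤ 1 := by nlinarith
  have hq : ∀ (K : Finset ℕ) (i : ℕ), i < M → i ∉ K → K ⊆ Finset.range M →
      ν.real {a | ∀ j ∈ insert i K, ¬ has a j} ≤ (1 - h) ^ r * ν.real {a | ∀ j ∈ K, ¬ has a j} := by
    intro K i hi hiK hK
    rw [hav _ (by simpa [Finset.insert_subset_iff, hi] using hK), hav K hK,
      Finset.card_insert_of_notMem hiK, ← mul_pow]
    have hc : (K.card : ℝ) + 1 ≤ M := by
      have : (insert i K).card ≤ (Finset.range M).card :=
        Finset.card_le_card (by simpa [Finset.insert_subset_iff, hi] using hK)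
      rw [Finset.card_insert_of_notMem hiK, Finset.card_range] at this
      exact_mod_cast this
    push_cast
    apply pow_le_pow_left₀
    · nlinarith
    · have : (0 : ℝ) ≤ K.card := by positivity
      nlinarith [mul_nonneg this (mul_nonneg h0 h0)]
  have key := grow_tail2 (V := V) ν has (fun _ => False) (by simp [hhas]) M ((1 - h) ^ r)
    (pow_nonneg (by linarith) _) hq (r * h) (by positivity) (by
      calc (1 - h) ^ r ≤ Real.exp (-h) ^ r := by
            apply pow_le_pow_left₀ (by linarith)
            linarith [Real.add_one_le_exp (-h)]
        _ = _ := by rw [← Real.exp_nat_mul]; congr 1; ring) n a b hn ha hab hbn hmin ε hε0 hε1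
      (by linarith) S hS
  refine le_trans (le_of_eq ?_) key
  have hmap : (Measure.pi fun _ : Sym2 V => ν) =
      (contModel V (Measure.dirac r)).map (fun ω e => d (ω e)) := by
    rw [contModel, model, Measure.pi_map_pi (fun _ => hdm.aemeasurable)]
  rw [hmap, map_measureReal_apply (by fun_prop) (Set.toFinite _).measurableSet]
  congr 1
  ext ω
  simp only [Set.mem_preimage, Set.mem_ofPred_eq]
  rw [grow_map (hasLab J) has d M hcompat ω S M le_rfl]

/-! ### Deterministic reachability -/

section Det

variable {V : Type}

lemma reachBy_mono (Λ : TGraph V) (S : Set V) {t t' : ℝ} (h : t ≤ t') (v : V)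
    (hv : ReachBy Λ S t v) : ReachBy Λ S t' v := by
  rcases hv with hv | ⟨k, f, ts, hk, h0, hkv, hl, hs, ht⟩
  · exact Or.inl hv
  · exact Or.inr ⟨k, f, ts, hk, h0, hkv, hl, hs, ht.trans h⟩

lemma reachBy_append (Λ : TGraph V) (S : Set V) (t l : ℝ) (v w : V)
    (hv : ReachBy Λ S t v) (hl : l ∈ Λ s(v, w)) (htl : t < l) : ReachBy Λ S l w := by
  rcases hv with hv | ⟨k, f, ts, hk, h0, hkv, hlab, hs, ht⟩
  · refine Or.inr ⟨1, fun i => if i = 0 then v else w, fun _ => l, one_pos, by simpa using hv,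
      by simp, ?_, ?_, le_rfl⟩
    · intro i hi
      obtain rfl : i = 0 := by omega
      simpa using hl
    · intro i j hij hj; omega
  · refine Or.inr ⟨k + 1, fun i => if i ≤ k then f i else w, fun i => if i < k then ts i else l,
      by omega, by simpa using h0, by simp, ?_, ?_, by simp⟩
    · intro i hi
      rcases Nat.lt_succ_iff_lt_or_eq.1 hi with h | rfl
      · have h1 : i ≤ k := h.le
        have h2 : i + 1 ≤ k := h
        simp only [h, h1, h2, if_true]
        exact hlab i h
      · simpa [hkv] using hl
    · intro i j hij hj
      rcases Nat.lt_succ_iff_lt_or_eq.1 hj with h | rfl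
      · have h1 : i < k := by omega
        simp only [h, h1, if_true]
        exact hs i j hij h
      · simp only [hij, if_true, lt_irrefl, if_false]
        have h3 : ts i ≤ ts (j - 1) := by
          rcases Nat.lt_or_ge i (j - 1) with h4 | h4
          · exact (hs i (j - 1) h4 (by omega)).le
          · obtain rfl : i = j - 1 := by omega
            exact le_rfl
        linarith

/-- `v` can reach the set `U` by a temporal path with labels in `(t, T]`. -/
def BackBy (Λ : TGraph V) (U : Set V) (t T : ℝ) (v : V) : Prop :=
  v ∈ U ∨ ∃ (k : ℕ) (f : ℕ → V) (ts : ℕ → ℝ), 0 < k ∧ f 0 = v ∧ f k ∈ U ∧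
    (∀ i < k, ts i ∈ Λ s(f i, f (i + 1))) ∧
    (∀ i j, i < j → j < k → ts i < ts j) ∧ t < ts 0 ∧ ts (k - 1) ≤ T

lemma backBy_mono (Λ : TGraph V) (U : Set V) {t t' T : ℝ} (h : t' ≤ t) (v : V)
    (hv : BackBy Λ U t T v) : BackBy Λ U t' T v := by
  rcases hv with hv | ⟨k, f, ts, hk, h0, hkv, hl, hs, ht, hT⟩
  · exact Or.inl hv
  · exact Or.inr ⟨k, f, ts, hk, h0, hkv, hl, hs, h.trans_lt ht, hT⟩

lemma backBy_prepend (Λ : TGraph V) (U : Set V) (t t' T l : ℝ) (v w : V)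
    (hv : BackBy Λ U t T v) (hl : l ∈ Λ s(v, w)) (h1 : l ≤ t) (h2 : t' < l) (h3 : t ≤ T) :
    BackBy Λ U t' T w := by
  rw [Sym2.eq_swap] at hl
  rcases hv with hv | ⟨k, f, ts, hk, h0, hkv, hlab, hs, ht, hT⟩
  · refine Or.inr ⟨1, fun i => if i = 0 then w else v, fun _ => l, one_pos, by simp,
      by simpa using hv, ?_, ?_, h2, h1.trans h3⟩
    · intro i hi
      obtain rfl : i = 0 := by omega
      simpa using hl
    · intro i j hij hj; omega
  · refine Or.inr ⟨k + 1, fun i => if i = 0 then w else f (i - 1),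
      fun i => if i = 0 then l else ts (i - 1),
      by omega, by simp, by simpa using hkv, ?_, ?_, by simpa using h2, ?_⟩
    · intro i hi
      rcases Nat.eq_zero_or_pos i with rfl | hi0
      · simpa [h0] using hl
      · obtain ⟨i, rfl⟩ := Nat.exists_eq_succ_of_ne_zero hi0.ne'
        simpa using hlab i (by omega)
    · intro i j hij hj
      obtain ⟨j, rfl⟩ := Nat.exists_eq_succ_of_ne_zero (show j ≠ 0 by omega)
      rcases Nat.eq_zero_or_pos i with rfl | hi0
      · have h5 : ts 0 ≤ ts j := by
          rcases Nat.eq_zero_or_pos j with rfl | hj0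
          · exact le_rfl
          · exact (hs 0 j hj0 (by omega)).le
        simp only [if_true, Nat.succ_ne_zero, if_false, Nat.succ_sub_one]
        linarith
      · obtain ⟨i, rfl⟩ := Nat.exists_eq_succ_of_ne_zero hi0.ne'
        simpa using hs i j (by omega) (by omega)
    · simpa [hk.ne'] using hT

lemma reachBy_of_backBy (Λ : TGraph V) (U S : Set V) (t T : ℝ) (v : V) (hvS : v ∈ S)
    (hv : BackBy Λ U t T v) : ∃ u ∈ U, ReachBy Λ S T u := by
  rcases hv with hv | ⟨k, f, ts, hk, h0, hkv, hlab, hs, ht, hT⟩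
  · exact ⟨v, hv, Or.inl hvS⟩
  · exact ⟨f k, hkv, Or.inr ⟨k, f, ts, hk, by rw [h0]; exact hvS, rfl, hlab, hs, hT⟩⟩

variable [Fintype V] [DecidableEq V]

/-- Forward slots. -/
def slotF (h : ℝ) (i : ℕ) : Set ℝ := Set.Ioc (i * h) ((i + 1) * h)

/-- Backward slots. -/
def slotB (h : ℝ) (M : ℕ) (i : ℕ) : Set ℝ := Set.Ioc (((M : ℝ) - (i + 1)) * h) (((M : ℝ) - i) * h)

lemma mem_toTGraph (ω : Sym2 V → LabelSpace) (e : Sym2 V) (l : ℝ) :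
    l ∈ toTGraph ω e ↔ ¬ e.IsDiag ∧ ∃ i, (ω e).2 i = l := by
  unfold toTGraph
  split_ifs with h <;> simp [h]

lemma grow_reach (ω : Sym2 V → LabelSpace) (h : ℝ) (hh : 0 ≤ h) (S : Finset V) (i : ℕ) (v : V)
    (hv : v ∈ grow (hasLab (slotF h)) ω S i) : ReachBy (toTGraph ω) S (i * h) v := by
  induction i generalizing v with
  | zero => exact Or.inl hv
  | succ i ih =>
    have hstep : (i : ℝ) * h ≤ ((i + 1 : ℕ) : ℝ) * h := by
      push_cast; nlinarith
    rw [grow_succ] at hv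
    rcases hv with hv | ⟨x, hx, m, hm⟩
    · exact reachBy_mono _ _ hstep v (ih v hv)
    · by_cases hxv : x = v
      · subst hxv; exact reachBy_mono _ _ hstep x (ih x hx)
      · have := reachBy_append (toTGraph ω) S (i * h) _ x v (ih x hx)
          ((mem_toTGraph ω _ _).2 ⟨by simpa using hxv, m, rfl⟩) hm.1
        refine reachBy_mono _ _ ?_ v this
        push_cast
        exact hm.2

lemma grow_back (ω : Sym2 V → LabelSpace) (h : ℝ) (hh : 0 ≤ h) (M : ℕ) (U : Finset V) (i : ℕ)
    (v : V) (hv : v ∈ grow (hasLab (slotB h M)) ω U i) :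
    BackBy (toTGraph ω) U (((M : ℝ) - i) * h) (M * h) v := by
  induction i generalizing v with
  | zero => exact Or.inl hv
  | succ i ih =>
    have hstep : ((M : ℝ) - (i + 1 : ℕ)) * h ≤ ((M : ℝ) - i) * h := by
      push_cast; nlinarith
    rw [grow_succ] at hv
    rcases hv with hv | ⟨x, hx, m, hm⟩
    · exact backBy_mono _ _ hstep v (ih v hv)
    · by_cases hxv : x = v
      · subst hxv; exact backBy_mono _ _ hstep x (ih x hx)
      · refine backBy_prepend (toTGraph ω) U (((M : ℝ) - i) * h) _ _ ((ω s(x, v)).2 m) x v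
          (ih x hx) ((mem_toTGraph ω _ _).2 ⟨by simpa using hxv, m, rfl⟩) hm.2 ?_ ?_
        · push_cast; exact hm.1
        · have : (0 : ℝ) ≤ i := by positivity
          nlinarith

lemma rank_eq (ω : Sym2 V → LabelSpace) (x : ℝ) : rank ω x =
    ∑ e ∈ Finset.univ.filter (fun e : Sym2 V => ¬ e.IsDiag),
      (Finset.univ.filter (fun i => (ω e).2 i ≤ x)).card := by
  unfold rank
  apply Finset.sum_congr rfl
  intro e _
  rw [Nat.card_eq_fintype_card, Fintype.card_subtype]

lemma rank_mono (ω : Sym2 V → LabelSpace) : Monotone (rank ω) := by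
  intro x y hxy
  rw [rank_eq, rank_eq]
  apply Finset.sum_le_sum
  intro e _
  apply Finset.card_le_card
  intro i hi
  simp only [Finset.mem_filter, Finset.mem_univ, true_and] at hi ⊢
  exact hi.trans hxy

lemma rank_lt (ω : Sym2 V → LabelSpace) {x y : ℝ} (hxy : x < y) (e : Sym2 V)
    (hy : y ∈ toTGraph ω e) : rank ω x < rank ω y := by
  obtain ⟨hd, m, rfl⟩ := (mem_toTGraph ω e y).1 hy
  rw [rank_eq, rank_eq]
  have hsub : ∀ e', Finset.univ.filter (fun i => (ω e').2 i ≤ x) ⊆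
      Finset.univ.filter (fun i => (ω e').2 i ≤ (ω e).2 m) := by
    intro e' i hi
    simp only [Finset.mem_filter, Finset.mem_univ, true_and] at hi ⊢
    exact hi.trans hxy.le
  apply Finset.sum_lt_sum
  · intro e' _
    exact Finset.card_le_card (hsub e')
  · refine ⟨e, by simpa using hd, Finset.card_lt_card ?_⟩
    refine (Finset.ssubset_iff_of_subset (hsub e)).2 ⟨m, by simp, by simpa using hxy⟩

lemma reachBy_orderDisc (ω : Sym2 V → LabelSpace) (S : Set V) (t : ℝ) (v : V)
    (hv : ReachBy (toTGraph ω) S t v) : ReachBy (orderDisc ω) S (rank ω t) v := by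
  rcases hv with hv | ⟨k, f, ts, hk, h0, hkv, hlab, hs, ht⟩
  · exact Or.inl hv
  · refine Or.inr ⟨k, f, fun i => (rank ω (ts i) : ℝ), hk, h0, hkv, ?_, ?_, ?_⟩
    · intro i hi
      obtain ⟨hd, m, hm⟩ := (mem_toTGraph ω _ _).1 (hlab i hi)
      unfold orderDisc
      rw [if_neg hd]
      simp only [Finset.mem_image, Finset.mem_univ, true_and]
      exact ⟨m, by rw [hm]⟩
    · intro i j hij hj
      exact Nat.cast_lt.2 (rank_lt ω (hs i j hij hj) _ (hlab j hj))
    · exact Nat.cast_le.2 (rank_mono ω ht)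

lemma doubleAll_le (n : ℕ) (hn : Fintype.card V = n) (ω : Sym2 V → LabelSpace) (h : ℝ)
    (hh : 0 ≤ h) (M : ℕ) (X : ℝ) (hrank : (rank ω (M * h) : ℝ) ≤ X)
    (hF : ∀ S : Finset V, 0 < S.card → 3 * S.card ≤ n →
      2 * S.card ≤ (grow (hasLab (slotF h)) ω S M).card)
    (hB : ∀ k, n < 3 * k → 2 * k ≤ n → ∀ U : Finset V, U.card = n - 2 * k + 1 →
      n - k + 1 ≤ (grow (hasLab (slotB h M)) ω U M).card) :
    doubleAll (orderDisc ω) ≤ ENNReal.ofReal X := by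
  classical
  unfold doubleAll
  refine iSup₂_le ?_
  rintro S ⟨hne, hS⟩
  unfold doubleTime
  refine (iInf₂_le ((rank ω (M * h) : ℝ)) ⟨by positivity, ?_⟩).trans (ENNReal.ofReal_le_ofReal hrank)
  rw [hn] at hS
  set T : Finset V := S.toFinset with hT
  have hTS : (T : Set V) = S := by simp [hT]
  have hTc : S.ncard = T.card := by rw [← hTS, Set.ncard_coe_finset]
  have hTpos : 0 < T.card := by
    rw [Finset.card_pos]; simpa [hT] using hne
  rw [hTc] at hS ⊢
  set Bs := ball (orderDisc ω) S (rank ω (M * h)) with hBs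
  by_cases h3 : 3 * T.card ≤ n
  · refine (hF T hTpos h3).trans ?_
    rw [← Set.ncard_coe_finset]
    apply Set.ncard_le_ncard _ (Set.toFinite _)
    intro v hv
    have := grow_reach ω h hh T M v hv
    rw [hTS] at this
    exact reachBy_orderDisc ω S _ v this
  · by_contra hcon
    push Not at hcon h3
    set BF : Finset V := Bs.toFinset with hBF
    have hBc : Bs.ncard = BF.card := by
      rw [← Set.ncard_coe_finset]; simp [hBF]
    rw [hBc] at hcon
    have hcomp : n - 2 * T.card + 1 ≤ (BFᶜ).card := by
      rw [Finset.card_compl, hn]; omega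
    obtain ⟨U, hU, hUc⟩ := Finset.exists_subset_card_eq hcomp
    have hgr := hB T.card h3 hS U hUc
    have hmeet : ∃ v, v ∈ T ∧ v ∈ grow (hasLab (slotB h M)) ω U M := by
      by_contra hno
      push Not at hno
      have hdis : Disjoint T (grow (hasLab (slotB h M)) ω U M) := Finset.disjoint_left.2 hno
      have := Finset.card_le_univ (T ∪ grow (hasLab (slotB h M)) ω U M)
      rw [Finset.card_union_of_disjoint hdis, hn] at this
      omega
    obtain ⟨v, hvT, hv⟩ := hmeet
    obtain ⟨u, huU, hu⟩ := reachBy_of_backBy (toTGraph ω) U S _ _ v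
      (by rw [← hTS]; exact hvT) (grow_back ω h hh M U M v hv)
    have h1 : u ∈ BF := by
      rw [hBF, Set.mem_toFinset]
      exact reachBy_orderDisc ω S _ u hu
    have h2 := hU huU
    rw [Finset.mem_compl] at h2
    exact h2 h1

end Det

/-! ### Concentration of the rank -/

lemma measurable_labelSpace {β : Type*} [MeasurableSpace β] (f : LabelSpace → β)
    (h : ∀ k, Measurable fun x : Fin k → ℝ => f ⟨k, x⟩) : Measurable f := by
  intro s hs
  exact measurableSet_labelSpace _ fun k => h k hs

/-- One-label weight. -/
def labW (c t x : ℝ) : ℝ := if x ≤ t then c else 1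

/-- Edge weight. -/
def edgeW (c t : ℝ) (l : LabelSpace) : ℝ := ∏ i, labW c t (l.2 i)

lemma measurable_labW (c t : ℝ) : Measurable (labW c t) :=
  Measurable.ite measurableSet_Iic measurable_const measurable_const

lemma measurable_edgeW (c t : ℝ) : Measurable (edgeW c t) := by
  apply measurable_labelSpace
  intro k
  have : Measurable fun x : Fin k → ℝ => ∏ i, labW c t (x i) :=
    Finset.measurable_fun_prod _ fun i _ => (measurable_labW c t).comp (measurable_pi_apply i)
  exact this

lemma integrable_labW (c t : ℝ) : Integrable (labW c t) unif01 := by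
  refine Integrable.of_bound (measurable_labW c t).aestronglyMeasurable (max |c| 1) ?_
  refine Eventually.of_forall fun x => ?_
  unfold labW
  split_ifs <;> simp

lemma integral_labW (c t : ℝ) (h0 : 0 ≤ t) (h1 : t ≤ 1) :
    ∫ x, labW c t x ∂unif01 = 1 + (c - 1) * t := by
  have : labW c t = fun x => 1 + (Set.Iic t).indicator (fun _ => c - 1) x := by
    funext x
    unfold labW
    by_cases hx : x ≤ t <;> simp [hx]
  rw [this, integral_add (integrable_const _)
    ((integrable_const _).indicator measurableSet_Iic), integral_indicator measurableSet_Iic]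
  simp only [integral_const, probReal_univ, smul_eq_mul, mul_one]
  congr 1
  rw [measureReal_restrict_apply_univ, unif01, measureReal_restrict_apply measurableSet_Iic]
  have : Set.Iic t ∩ Set.Ioc 0 1 = Set.Ioc 0 t := by
    ext x; simp only [Set.mem_inter_iff, Set.mem_Iic, Set.mem_Ioc]
    constructor
    · rintro ⟨a, b, _⟩; exact ⟨b, a⟩
    · rintro ⟨a, b⟩; exact ⟨b, a, b.trans h1⟩
  rw [this]
  simp [h0, mul_comm]

lemma integrable_edgeW (r : ℕ) (c t : ℝ) :
    Integrable (edgeW c t) (edgeMeasure unif01 (Measure.dirac r)) := by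
  rw [edgeMeasure_dirac, integrable_map_measure (measurable_edgeW c t).aestronglyMeasurable
    (measurable_sigma_mk r).aemeasurable]
  exact Integrable.fintype_prod (f := fun _ : Fin r => labW c t) fun _ => integrable_labW c t

lemma integral_edgeW (r : ℕ) (c t : ℝ) (h0 : 0 ≤ t) (h1 : t ≤ 1) :
    ∫ l, edgeW c t l ∂(edgeMeasure unif01 (Measure.dirac r)) = (1 + (c - 1) * t) ^ r := by
  rw [edgeMeasure_dirac, integral_map (measurable_sigma_mk r).aemeasurable
    (measurable_edgeW c t).aestronglyMeasurable]
  simp only [edgeW]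
  rw [integral_fintype_prod_eq_prod (fun (_ : Fin r) => labW c t)]
  simp [integral_labW c t h0 h1]

lemma rank_tail {V : Type} [Fintype V] [DecidableEq V] (r : ℕ) (c t X : ℝ) (h0 : 0 ≤ t)
    (h1 : t ≤ 1) (hc : 1 < c) :
    (contModel V (Measure.dirac r)).real {ω | ¬ (rank ω t : ℝ) ≤ X} ≤
      c ^ (-X) * (1 + (c - 1) * t) ^ (r * (Fintype.card V).choose 2) := by
  set F : Sym2 V → LabelSpace → ℝ := fun e l => if e.IsDiag then 1 else edgeW c t l with hF
  have hFi : ∀ e, Integrable (F e) (edgeMeasure unif01 (Measure.dirac r)) := by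
    intro e
    simp only [hF]
    split_ifs
    · exact integrable_const _
    · exact integrable_edgeW r c t
  have hIntg : Integrable (fun ω : Sym2 V → LabelSpace => ∏ e, F e (ω e))
      (contModel V (Measure.dirac r)) :=
    Integrable.fintype_prod (f := F) hFi
  have hval : ∀ ω : Sym2 V → LabelSpace, ∏ e, F e (ω e) = c ^ (rank ω t) := by
    intro ω
    rw [rank_eq, ← Finset.prod_pow_eq_pow_sum, Finset.prod_filter]
    apply Finset.prod_congr rfl
    intro e _
    by_cases he : e.IsDiag
    · simp [hF, he]
    · simp only [hF, he, if_false, not_false_eq_true, if_true, edgeW, labW]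
      rw [Finset.prod_ite]
      simp
  have hE : ∫ ω, ∏ e, F e (ω e) ∂(contModel V (Measure.dirac r)) =
      (1 + (c - 1) * t) ^ (r * (Fintype.card V).choose 2) := by
    rw [contModel, model, integral_fintype_prod_eq_prod]
    have : ∀ e : Sym2 V, ∫ l, F e l ∂(edgeMeasure unif01 (Measure.dirac r)) =
        if ¬ e.IsDiag then (1 + (c - 1) * t) ^ r else 1 := by
      intro e
      by_cases he : e.IsDiag
      · simp [hF, he]
      · simp [hF, he, integral_edgeW r c t h0 h1]
    simp only [this]
    rw [← Finset.prod_filter, Finset.prod_const, ← pow_mul, ← Fintype.card_subtype,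
      Sym2.card_subtype_not_diag]
  have hmk := mul_meas_ge_le_integral_of_nonneg (μ := contModel V (Measure.dirac r))
    (Eventually.of_forall fun ω => by
      simp only [hval, Pi.zero_apply]; positivity) hIntg (c ^ X)
  rw [hE] at hmk
  rw [Real.rpow_neg (by linarith), inv_mul_eq_div, le_div_iff₀ (by positivity), mul_comm]
  refine le_trans ?_ hmk
  apply mul_le_mul_of_nonneg_left _ (by positivity)
  refine measureReal_mono ?_ (measure_ne_top _ _)
  intro ω hω
  have hω' : X ≤ rank ω t := (not_le.1 hω).le
  show c ^ X ≤ ∏ e, F e (ω e)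
  rw [hval, ← Real.rpow_natCast]
  exact Real.rpow_le_rpow_of_exponent_le hc.le hω'

lemma slotF_meas (h : ℝ) (j : ℕ) : MeasurableSet (slotF h j) := measurableSet_Ioc
lemma slotB_meas (h : ℝ) (M j : ℕ) : MeasurableSet (slotB h M j) := measurableSet_Ioc

lemma unif01_Ioc (x y : ℝ) (h0 : 0 ≤ x) (hxy : x ≤ y) (h1 : y ≤ 1) :
    unif01.real (Set.Ioc x y) = y - x := by
  rw [unif01, measureReal_restrict_apply measurableSet_Ioc,
    Set.inter_eq_left.2 (Set.Ioc_subset_Ioc h0 h1)]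
  simp [hxy]

lemma slotF_unif (h : ℝ) (hh : 0 ≤ h) (M : ℕ) (hM : M * h ≤ 1) (j : ℕ) (hj : j < M) :
    unif01.real (slotF h j) = h := by
  have hj' : (j : ℝ) + 1 ≤ M := by exact_mod_cast hj
  have hj0 : (0 : ℝ) ≤ j := by positivity
  rw [slotF, unif01_Ioc _ _ (by positivity) (by nlinarith) (by nlinarith)]
  ring

lemma slotB_unif (h : ℝ) (hh : 0 ≤ h) (M : ℕ) (hM : M * h ≤ 1) (j : ℕ) (hj : j < M) :
    unif01.real (slotB h M j) = h := by
  have hj' : (j : ℝ) + 1 ≤ M := by exact_mod_cast hj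
  have hj0 : (0 : ℝ) ≤ j := by positivity
  rw [slotB, unif01_Ioc _ _ (mul_nonneg (by linarith) hh) (by nlinarith) (by nlinarith)]
  ring

lemma slotF_disj (h : ℝ) (hh : 0 ≤ h) (s : Set ℕ) : s.PairwiseDisjoint (slotF h) := by
  have key : ∀ i j : ℕ, i < j → Disjoint (slotF h i) (slotF h j) := by
    intro i j hij
    rw [Set.disjoint_left]
    rintro x ⟨_, h1⟩ ⟨h2, _⟩
    have : (i : ℝ) + 1 ≤ j := by exact_mod_cast hij
    nlinarith
  intro i _ j _ hij
  rcases lt_or_gt_of_ne hij with h1 | h1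
  · exact key i j h1
  · exact (key j i h1).symm

lemma slotB_disj (h : ℝ) (hh : 0 ≤ h) (M : ℕ) (s : Set ℕ) : s.PairwiseDisjoint (slotB h M) := by
  have key : ∀ i j : ℕ, i < j → Disjoint (slotB h M i) (slotB h M j) := by
    intro i j hij
    rw [Set.disjoint_left]
    rintro x ⟨h1, _⟩ ⟨_, h2⟩
    have : (i : ℝ) + 1 ≤ j := by exact_mod_cast hij
    nlinarith
  intro i _ j _ hij
  rcases lt_or_gt_of_ne hij with h1 | h1
  · exact key i j h1
  · exact (key j i h1).symm

/-! ### Analytic estimates -/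

lemma wt_crude (n a b : ℕ) (ha : 0 < a) (hab : a < b) (hbn : b ≤ n)
    (hmin : ∀ j, a ≤ j → j < b → (a : ℝ) * ((n : ℝ) - a) ≤ j * ((n : ℝ) - j))
    (ε : ℝ) (hε0 : 0 < ε) (hε1 : ε < 1) : wt n a b ε ≤ (ε⁻¹) ^ (b - a) := by
  have hanR : (a : ℝ) < n := by exact_mod_cast (lt_of_lt_of_le hab hbn)
  have haR : (0 : ℝ) < a := by exact_mod_cast ha
  have hL : 0 < (a : ℝ) * ((n : ℝ) - a) := mul_pos haR (by linarith)
  unfold wt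
  have hx1 : ∀ l ∈ Finset.Ico a b,
      (1 - ε) * (a * ((n : ℝ) - a)) / (l * ((n : ℝ) - l)) ≤ 1 - ε := by
    intro l hl
    rw [Finset.mem_Ico] at hl
    have := hmin l hl.1 hl.2
    rw [div_le_iff₀ (by linarith)]
    exact mul_le_mul_of_nonneg_left this (by linarith)
  calc _ ≤ ∏ _l ∈ Finset.Ico a b, ε⁻¹ := by
        apply Finset.prod_le_prod
        · intro l hl
          have := hx1 l hl
          exact inv_nonneg.2 (by linarith)
        · intro l hl
          have := hx1 l hl
          exact inv_anti₀ hε0 (by linarith)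
    _ = _ := by simp

lemma wt_nonneg (n a b : ℕ) (ha : 0 < a) (hab : a < b) (hbn : b ≤ n)
    (hmin : ∀ j, a ≤ j → j < b → (a : ℝ) * ((n : ℝ) - a) ≤ j * ((n : ℝ) - j))
    (ε : ℝ) (hε0 : 0 < ε) (hε1 : ε < 1) : 0 ≤ wt n a b ε := by
  have hanR : (a : ℝ) < n := by exact_mod_cast (lt_of_lt_of_le hab hbn)
  have haR : (0 : ℝ) < a := by exact_mod_cast ha
  have hL : 0 < (a : ℝ) * ((n : ℝ) - a) := mul_pos haR (by linarith)
  unfold wt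
  apply Finset.prod_nonneg
  intro l hl
  rw [Finset.mem_Ico] at hl
  have hh := hmin l hl.1 hl.2
  apply inv_nonneg.2
  rw [sub_nonneg, div_le_one (by linarith)]
  nlinarith

lemma wt_fine (n m k : ℕ) (hm : 0 < m) (hk3 : n < 3 * k) (hk2 : 2 * k ≤ n)
    (hmk : m = n - 2 * k + 1)
    (hmin : ∀ j, m ≤ j → j < n - k + 1 → (m : ℝ) * ((n : ℝ) - m) ≤ j * ((n : ℝ) - j))
    (ε : ℝ) (hε0 : 0 < ε) (hε1 : ε < 1) :
    wt n m (n - k + 1) ε ≤ Real.exp (m * (Real.log n + 4 + 18 / ε)) := by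
  have hmR : (0 : ℝ) < m := by exact_mod_cast hm
  have hnpos : 0 < n := by omega
  have hnR : (0 : ℝ) < n := by exact_mod_cast hnpos
  have hmn : m < n := by omega
  have hmnR : (m : ℝ) < n := by exact_mod_cast hmn
  have hk3R : (n : ℝ) < 3 * k := by exact_mod_cast hk3
  have hL : 0 < (m : ℝ) * ((n : ℝ) - m) := mul_pos hmR (by linarith)
  unfold wt
  set x : ℕ → ℝ := fun l => (1 - ε) * (m * ((n : ℝ) - m)) / (l * ((n : ℝ) - l)) with hx
  have hfac : ∀ l ∈ Finset.Ico m (n - k + 1),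
      0 ≤ (1 - x l)⁻¹ ∧ (1 - x l)⁻¹ ≤ Real.exp ((m * (l : ℝ)⁻¹ + 3 * m / n) +
        9 * (m : ℝ) ^ 2 / ε * ((l : ℝ) ^ 2)⁻¹) := by
    intro l hl
    rw [Finset.mem_Ico] at hl
    have hlk : (l : ℝ) + k ≤ n := by
      have : l + k ≤ n := by omega
      exact_mod_cast this
    have hlR : (0 : ℝ) < l := lt_of_lt_of_le hmR (by exact_mod_cast hl.1)
    have hnl : (n : ℝ) / 3 < n - l := by linarith
    have hnl0 : 0 < (n : ℝ) - l := by linarith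
    have hden : 0 < (l : ℝ) * ((n : ℝ) - l) := mul_pos hlR hnl0
    have hmin' := hmin l hl.1 hl.2
    have hx0 : 0 ≤ x l := div_nonneg (mul_nonneg (by linarith) hL.le) hden.le
    have hx1 : x l ≤ 1 - ε := by
      simp only [hx]
      rw [div_le_iff₀ hden]
      exact mul_le_mul_of_nonneg_left hmin' (by linarith)
    have hxz : x l ≤ m * ((n : ℝ) - m) / (l * ((n : ℝ) - l)) := by
      simp only [hx]
      apply div_le_div_of_nonneg_right _ hden.le
      nlinarith
    have hA : x l ≤ m * (l : ℝ)⁻¹ + 3 * m / n := by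
      refine hxz.trans ?_
      have e1 : m * ((n : ℝ) - m) / (l * ((n : ℝ) - l)) ≤ m * n / (l * ((n : ℝ) - l)) := by
        apply div_le_div_of_nonneg_right _ hden.le
        nlinarith
      have e2 : m * (n : ℝ) / (l * ((n : ℝ) - l)) = m * (l : ℝ)⁻¹ + m / ((n : ℝ) - l) := by
        field_simp
        ring
      have e3 : m / ((n : ℝ) - l) ≤ 3 * m / n := by
        rw [div_le_div_iff₀ hnl0 hnR]
        nlinarith
      linarith
    have hB : x l ≤ 3 * m * (l : ℝ)⁻¹ := by
      refine hxz.trans ?_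
      rw [div_le_iff₀ hden]
      have : 3 * (m : ℝ) * (l : ℝ)⁻¹ * (l * (n - l)) = 3 * m * (n - l) := by field_simp
      rw [this]
      nlinarith
    refine ⟨inv_nonneg.2 (by linarith), ?_⟩
    have e1 : (1 - x l)⁻¹ ≤ 1 + (x l + (x l) ^ 2 / ε) := by
      rw [inv_le_iff_one_le_mul₀ (by linarith)]
      have : (x l) ^ 2 ≤ (x l) ^ 2 / ε * (1 - x l) := by
        rw [div_mul_eq_mul_div, le_div_iff₀ hε0]
        exact mul_le_mul_of_nonneg_left (by linarith) (sq_nonneg _)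
      nlinarith
    have e2 : 1 + (x l + (x l) ^ 2 / ε) ≤ Real.exp (x l + (x l) ^ 2 / ε) := by
      linarith [Real.add_one_le_exp (x l + (x l) ^ 2 / ε)]
    refine e1.trans (e2.trans (Real.exp_le_exp.2 ?_))
    have e3 : (x l) ^ 2 ≤ 9 * (m : ℝ) ^ 2 * ((l : ℝ) ^ 2)⁻¹ := by
      calc (x l) ^ 2 ≤ (3 * m * (l : ℝ)⁻¹) ^ 2 := pow_le_pow_left₀ hx0 hB 2
        _ = _ := by rw [mul_pow, mul_pow, inv_pow]; norm_num
    have e4 : (x l) ^ 2 / ε ≤ 9 * (m : ℝ) ^ 2 / ε * ((l : ℝ) ^ 2)⁻¹ := by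
      rw [div_mul_eq_mul_div]
      exact div_le_div_of_nonneg_right e3 hε0.le
    linarith
  calc _ ≤ ∏ l ∈ Finset.Ico m (n - k + 1), Real.exp ((m * (l : ℝ)⁻¹ + 3 * m / n) +
        9 * (m : ℝ) ^ 2 / ε * ((l : ℝ) ^ 2)⁻¹) :=
      Finset.prod_le_prod (fun l hl => (hfac l hl).1) (fun l hl => (hfac l hl).2)
    _ = Real.exp ((m * ∑ l ∈ Finset.Ico m (n - k + 1), (l : ℝ)⁻¹ +
        (n - k + 1 - m : ℕ) * (3 * m / n)) +
        9 * (m : ℝ) ^ 2 / ε * ∑ l ∈ Finset.Ico m (n - k + 1), ((l : ℝ) ^ 2)⁻¹) := by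
      rw [← Real.exp_sum, Finset.sum_add_distrib, Finset.sum_add_distrib, ← Finset.mul_sum,
        ← Finset.mul_sum]
      simp
    _ ≤ _ := by
      apply Real.exp_le_exp.2
      have s1 : ∑ l ∈ Finset.Ico m (n - k + 1), (l : ℝ)⁻¹ ≤ 1 + Real.log n := by
        have h1 := harmonic_le_one_add_log n
        rw [harmonic_eq_sum_Icc] at h1
        push_cast at h1
        refine le_trans ?_ h1
        apply Finset.sum_le_sum_of_subset_of_nonneg
        · intro l hl
          rw [Finset.mem_Ico] at hl
          rw [Finset.mem_Icc]
          omega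
        · intro i _ _; positivity
      have s2 : ((n - k + 1 - m : ℕ) : ℝ) * (3 * m / n) ≤ 3 * m := by
        have : ((n - k + 1 - m : ℕ) : ℝ) ≤ n := by
          have : n - k + 1 - m ≤ n := by omega
          exact_mod_cast this
        calc _ ≤ (n : ℝ) * (3 * m / n) := mul_le_mul_of_nonneg_right this (by positivity)
          _ = _ := by field_simp
      have s3 : ∑ l ∈ Finset.Ico m (n - k + 1), ((l : ℝ) ^ 2)⁻¹ ≤ 2 / m := by
        have h1 := sum_Ioo_inv_sq_le (α := ℝ) (m - 1) (n - k + 1)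
        have h2 : Finset.Ioo (m - 1) (n - k + 1) = Finset.Ico m (n - k + 1) := by
          ext l; rw [Finset.mem_Ioo, Finset.mem_Ico]; omega
        rw [h2] at h1
        have h3 : (((m - 1 : ℕ) : ℝ) + 1) = m := by
          have : m - 1 + 1 = m := by omega
          exact_mod_cast this
        rw [h3] at h1
        exact h1
      have s4 : 9 * (m : ℝ) ^ 2 / ε * ∑ l ∈ Finset.Ico m (n - k + 1), ((l : ℝ) ^ 2)⁻¹ ≤
          18 * m / ε := by
        calc _ ≤ 9 * (m : ℝ) ^ 2 / ε * (2 / m) := mul_le_mul_of_nonneg_left s3 (by positivity)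
          _ = _ := by field_simp; ring
      have s5 := mul_le_mul_of_nonneg_left s1 hmR.le
      have s6 : (m : ℝ) * (Real.log n + 4 + 18 / ε) = m * (1 + Real.log n) + 3 * m + 18 * m / ε := by
        ring
      linarith

/-- Forward estimate. -/
lemma est_F (n a : ℕ) (ha : 0 < a) (h3 : 3 * a ≤ n) (ε A : ℝ) (hε0 : 0 < ε) (hε1 : ε < 1)
    (hA : 1 ≤ A) :
    (n.choose a : ℝ) * (wt n a (2 * a) ε *
      Real.exp (-(2 * A * Real.log n / n * (a * ((n : ℝ) - a))))) ≤
      Real.exp (Real.log ε⁻¹ - Real.log n / 3) ^ a := by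
  have hn : 0 < n := by omega
  have hnR : (0 : ℝ) < n := by exact_mod_cast hn
  have haR : (0 : ℝ) < a := by exact_mod_cast ha
  have h3R : 3 * (a : ℝ) ≤ n := by exact_mod_cast h3
  have hlog : 0 ≤ Real.log n := Real.log_natCast_nonneg n
  have h1 : (n.choose a : ℝ) ≤ Real.exp (a * Real.log n) := by
    rw [Real.exp_nat_mul, Real.exp_log hnR]
    exact_mod_cast Nat.choose_le_pow n a
  have hmin : ∀ j, a ≤ j → j < 2 * a → (a : ℝ) * ((n : ℝ) - a) ≤ j * ((n : ℝ) - j) := by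
    intro j hj1 hj2
    have e1 : (a : ℝ) ≤ j := by exact_mod_cast hj1
    have e2 : (j : ℝ) ≤ 2 * a := by exact_mod_cast hj2.le
    nlinarith
  have h0 := wt_nonneg n a (2 * a) ha (by omega) (by omega) hmin ε hε0 hε1
  have h2 : wt n a (2 * a) ε ≤ Real.exp (a * Real.log ε⁻¹) := by
    refine (wt_crude n a (2 * a) ha (by omega) (by omega) hmin ε hε0 hε1).trans ?_
    rw [Real.exp_nat_mul, Real.exp_log (inv_pos.2 hε0), show 2 * a - a = a by omega]
  have h4 : a * (4 / 3 * Real.log n) ≤ 2 * A * Real.log n / n * (a * ((n : ℝ) - a)) := by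
    rw [show 2 * A * Real.log n / n * (a * ((n : ℝ) - a)) =
      (2 * A * Real.log n * (a * ((n : ℝ) - a))) / n by ring, le_div_iff₀ hnR]
    have e1 : 2 / 3 * (n : ℝ) ≤ n - a := by linarith
    have e2 : 0 ≤ (a : ℝ) * Real.log n := by positivity
    have e3 : 2 / 3 * (n : ℝ) ≤ A * (n - a) := by nlinarith
    nlinarith [mul_le_mul_of_nonneg_left e3 e2]
  calc _ ≤ Real.exp (a * Real.log n) * (Real.exp (a * Real.log ε⁻¹) *
        Real.exp (-(a * (4 / 3 * Real.log n)))) := by gcongr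
    _ = _ := by
      rw [← Real.exp_add, ← Real.exp_add, ← Real.exp_nat_mul]
      congr 1; ring

/-- Backward estimate. -/
lemma est_B (n m k : ℕ) (hn2 : 2 ≤ n) (hk3 : n < 3 * k) (hk2 : 2 * k ≤ n)
    (hmk : m = n - 2 * k + 1) (ε A γ δ : ℝ) (hε0 : 0 < ε) (hε1 : ε < 1) (hγ : 0 < γ)
    (hA : 1 ≤ A) (hδ0 : 0 < δ) (hAδ : 1 + γ ≤ A * (1 - δ)) :
    (n.choose m : ℝ) * (wt n m (n - k + 1) ε *
      Real.exp (-(2 * A * Real.log n / n * (m * ((n : ℝ) - m))))) ≤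
      max (Real.exp (4 + 18 / ε - 2 * γ * Real.log n))
        (Real.exp (Real.log (2 * ε⁻¹) / δ - Real.log n)) ^ m := by
  have hm : 0 < m := by omega
  have hn : 0 < n := by omega
  have hnR : (0 : ℝ) < n := by exact_mod_cast hn
  have hmR : (0 : ℝ) < m := by exact_mod_cast hm
  have h2R : 2 * (m : ℝ) ≤ n := by
    have : 2 * m ≤ n := by omega
    exact_mod_cast this
  have hlog : 0 ≤ Real.log n := Real.log_natCast_nonneg n
  have hmin : ∀ j, m ≤ j → j < n - k + 1 → (m : ℝ) * ((n : ℝ) - m) ≤ j * ((n : ℝ) - j) := by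
    intro j hj1 hj2
    have e1 : (m : ℝ) ≤ j := by exact_mod_cast hj1
    have e2 : (j : ℝ) + m ≤ n := by
      have : j + m ≤ n := by omega
      exact_mod_cast this
    nlinarith
  by_cases hcase : (m : ℝ) ≤ δ * n
  · refine le_trans ?_ (pow_le_pow_left₀ (Real.exp_pos _).le (le_max_left _ _) m)
    have h1 : (n.choose m : ℝ) ≤ Real.exp (m * Real.log n) := by
      rw [Real.exp_nat_mul, Real.exp_log hnR]
      exact_mod_cast Nat.choose_le_pow n m
    have h0 := wt_nonneg n m (n - k + 1) hm (by omega) (by omega) hmin ε hε0 hε1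
    have h2 := wt_fine n m k hm hk3 hk2 hmk hmin ε hε0 hε1
    have h4 : m * ((2 + 2 * γ) * Real.log n) ≤ 2 * A * Real.log n / n * (m * ((n : ℝ) - m)) := by
      rw [div_mul_eq_mul_div, le_div_iff₀ hnR]
      have e1 : (1 - δ) * (n : ℝ) ≤ n - m := by linarith
      have e2 : 0 ≤ (m : ℝ) * Real.log n := by positivity
      have e3 : (1 + γ) * (n : ℝ) ≤ A * (n - m) := by
        calc (1 + γ) * (n : ℝ) ≤ A * (1 - δ) * n := mul_le_mul_of_nonneg_right hAδ hnR.le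
          _ = A * ((1 - δ) * n) := by ring
          _ ≤ _ := mul_le_mul_of_nonneg_left e1 (by linarith)
      nlinarith [mul_le_mul_of_nonneg_left e3 e2]
    calc _ ≤ Real.exp (m * Real.log n) * (Real.exp (m * (Real.log n + 4 + 18 / ε)) *
          Real.exp (-(m * ((2 + 2 * γ) * Real.log n)))) := by gcongr
      _ = _ := by
        rw [← Real.exp_add, ← Real.exp_add, ← Real.exp_nat_mul]
        congr 1; ring
  · push Not at hcase
    refine le_trans ?_ (pow_le_pow_left₀ (Real.exp_pos _).le (le_max_right _ _) m)
    have hε1' : 1 ≤ ε⁻¹ := (one_le_inv₀ hε0).2 hε1.le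
    have h2 : (n.choose m : ℝ) * wt n m (n - k + 1) ε ≤ Real.exp (n * Real.log (2 * ε⁻¹)) := by
      rw [Real.exp_nat_mul, Real.exp_log (by positivity), mul_pow]
      apply mul_le_mul
      · exact_mod_cast Nat.choose_le_two_pow n m
      · refine (wt_crude n m (n - k + 1) hm (by omega) (by omega) hmin ε hε0 hε1).trans ?_
        exact pow_le_pow_right₀ hε1' (by omega)
      · unfold wt
        apply Finset.prod_nonneg
        intro l hl
        rw [Finset.mem_Ico] at hl
        have hh := hmin l hl.1 hl.2
        have hL : 0 < (m : ℝ) * ((n : ℝ) - m) := mul_pos hmR (by linarith)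
        apply inv_nonneg.2
        rw [sub_nonneg, div_le_one (by linarith)]
        nlinarith
      · positivity
    have h3 : (n : ℝ) * Real.log (2 * ε⁻¹) ≤ m * (Real.log (2 * ε⁻¹) / δ) := by
      have hl : 0 ≤ Real.log (2 * ε⁻¹) := Real.log_nonneg (by linarith)
      rw [mul_div_assoc', le_div_iff₀ hδ0]
      nlinarith
    have h4 : m * Real.log n ≤ 2 * A * Real.log n / n * (m * ((n : ℝ) - m)) := by
      rw [div_mul_eq_mul_div, le_div_iff₀ hnR]
      have e2 : 0 ≤ (m : ℝ) * Real.log n := by positivity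
      have e3 : (n : ℝ) ≤ 2 * A * (n - m) := by nlinarith
      nlinarith [mul_le_mul_of_nonneg_left e3 e2]
    calc _ = (n.choose m : ℝ) * wt n m (n - k + 1) ε *
        Real.exp (-(2 * A * Real.log n / n * (m * ((n : ℝ) - m)))) := by ring
      _ ≤ Real.exp (m * (Real.log (2 * ε⁻¹) / δ)) * Real.exp (-(m * Real.log n)) := by
        apply mul_le_mul (h2.trans (Real.exp_le_exp.2 h3)) _ (Real.exp_pos _).le (Real.exp_pos _).le
        exact Real.exp_le_exp.2 (by linarith)
      _ = _ := by
        rw [← Real.exp_add, ← Real.exp_nat_mul]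
        congr 1; ring

/-! ### Assembly -/

lemma union_bound {Ω V : Type*} [MeasurableSpace Ω] [Fintype V] [DecidableEq V] (μ : Measure Ω)
    (n : ℕ) (hn : Fintype.card V = n) (bad : Finset V → Set Ω) (y : ℝ) (hy0 : 0 ≤ y)
    (hy : y ≤ 1 / 2)
    (hb : ∀ S : Finset V, 0 < S.card → (n.choose S.card : ℝ) * μ.real (bad S) ≤ y ^ S.card) :
    μ.real (⋃ S ∈ Finset.univ.filter (fun S : Finset V => 0 < S.card), bad S) ≤ 2 * y := by
  have hsub : ∀ S : Finset V, S.card ≤ n := fun S => hn ▸ S.card_le_univ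
  set z : ℕ → ℝ := fun c => if 0 < c then y ^ c / (n.choose c : ℝ) else 0 with hz
  calc _ ≤ ∑ S ∈ Finset.univ.filter (fun S : Finset V => 0 < S.card), μ.real (bad S) :=
        measureReal_biUnion_finset_le _ _
    _ ≤ ∑ S ∈ Finset.univ.filter (fun S : Finset V => 0 < S.card),
          y ^ S.card / (n.choose S.card : ℝ) := by
        apply Finset.sum_le_sum
        intro S hS
        have h0 : 0 < S.card := (Finset.mem_filter.1 hS).2
        have hc : (0 : ℝ) < n.choose S.card := by
          exact_mod_cast Nat.choose_pos (hsub S)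
        rw [le_div_iff₀ hc, mul_comm]
        exact hb S h0
    _ = ∑ S ∈ (Finset.univ : Finset V).powerset, z S.card := by
        rw [Finset.sum_filter]
        simp only [hz, Finset.powerset_univ]
    _ = ∑ m ∈ Finset.range (n + 1), (n.choose m) • z m := by
        rw [Finset.sum_powerset_apply_card, Finset.card_univ, hn]
    _ = ∑ m ∈ Finset.range n, y ^ (m + 1) := by
        rw [Finset.sum_range_succ']
        have : z 0 = 0 := by simp [hz]
        rw [this, smul_zero, add_zero]
        apply Finset.sum_congr rfl
        intro m hm
        have hc : (0 : ℝ) < n.choose (m + 1) := by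
          exact_mod_cast Nat.choose_pos (Finset.mem_range.1 hm)
        simp only [hz, Nat.succ_pos, if_true, nsmul_eq_mul]
        field_simp
    _ = y * ∑ m ∈ Finset.range n, y ^ m := by
        rw [Finset.mul_sum]
        exact Finset.sum_congr rfl fun m _ => by ring
    _ ≤ y * 2 := by
        apply mul_le_mul_of_nonneg_left _ hy0
        have h1 : (∑ m ∈ Finset.range n, y ^ m) * (1 - y) = 1 - y ^ n := geom_sum_mul_neg y n
        have h2 : 0 ≤ y ^ n := pow_nonneg hy0 n
        have h3 : 0 ≤ ∑ m ∈ Finset.range n, y ^ m :=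
          Finset.sum_nonneg fun m _ => pow_nonneg hy0 m
        nlinarith
    _ = _ := by ring

lemma fail_bound (r n M : ℕ) (hn2 : 2 ≤ n) (hM0 : 0 < M) (h ε A γ δ y X : ℝ) (h0 : 0 ≤ h)
    (hM : M * h ≤ 1) (hε0 : 0 < ε) (hε1 : ε < 1) (hγ : 0 < γ) (hA : 1 ≤ A) (hδ0 : 0 < δ)
    (hAδ : 1 + γ ≤ A * (1 - δ)) (hκn : r * h * (n : ℝ) ^ 2 ≤ ε)
    (hA2 : (1 - ε) ^ 2 * (r * h * M) = 2 * A * Real.log n / n)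
    (hy1 : Real.exp (Real.log ε⁻¹ - Real.log n / 3) ≤ y)
    (hy2 : Real.exp (4 + 18 / ε - 2 * γ * Real.log n) ≤ y)
    (hy3 : Real.exp (Real.log (2 * ε⁻¹) / δ - Real.log n) ≤ y) (hy : y ≤ 1 / 2) :
    (contModel (Fin n) (Measure.dirac r)).real
      {ω | ¬ doubleAll (orderDisc ω) ≤ ENNReal.ofReal X} ≤
    (contModel (Fin n) (Measure.dirac r)).real {ω | ¬ (rank ω (M * h) : ℝ) ≤ X} + 4 * y := by
  have hcard : Fintype.card (Fin n) = n := Fintype.card_fin n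
  have hy0 : 0 ≤ y := (Real.exp_pos _).le.trans hy1
  set μ := contModel (Fin n) (Measure.dirac r) with hμ
  set badF : Finset (Fin n) → Set (Sym2 (Fin n) → LabelSpace) := fun S =>
    {ω | 3 * S.card ≤ n ∧ (grow (hasLab (slotF h)) ω S M).card < 2 * S.card} with hbF
  set badB : Finset (Fin n) → Set (Sym2 (Fin n) → LabelSpace) := fun U =>
    {ω | ∃ k, n < 3 * k ∧ 2 * k ≤ n ∧ U.card = n - 2 * k + 1 ∧
      (grow (hasLab (slotB h M)) ω U M).card < n - k + 1} with hbB
  have hF : μ.real (⋃ S ∈ Finset.univ.filter (fun S : Finset (Fin n) => 0 < S.card), badF S) ≤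
      2 * y := by
    apply union_bound μ n hcard badF y hy0 hy
    intro S hS
    by_cases h3 : 3 * S.card ≤ n
    · have hmin : ∀ j, S.card ≤ j → j < 2 * S.card →
          (S.card : ℝ) * ((n : ℝ) - S.card) ≤ j * ((n : ℝ) - j) := by
        intro j hj1 hj2
        have e1 : (S.card : ℝ) ≤ j := by exact_mod_cast hj1
        have e2 : (j : ℝ) ≤ 2 * S.card := by exact_mod_cast hj2.le
        have e3 : 3 * (S.card : ℝ) ≤ n := by exact_mod_cast h3
        nlinarith
      have ht := model_tail (V := Fin n) r (slotF h) (slotF_meas h) M hM0 h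
        (slotF_disj h h0 _) (slotF_unif h h0 M hM) h0 hM n S.card (2 * S.card) hcard hS
        (by omega) (by omega) hmin ε hε0 hε1 hκn S rfl
      rw [hA2] at ht
      have hsub : μ.real (badF S) ≤ μ.real {ω | (grow (hasLab (slotF h)) ω S M).card < 2 * S.card} :=
        measureReal_mono (fun ω hω => hω.2)
      calc _ ≤ (n.choose S.card : ℝ) * (wt n S.card (2 * S.card) ε *
            Real.exp (-(2 * A * Real.log n / n * (S.card * ((n : ℝ) - S.card))))) :=
            mul_le_mul_of_nonneg_left (hsub.trans ht) (Nat.cast_nonneg _)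
        _ ≤ _ := est_F n S.card hS h3 ε A hε0 hε1 hA
        _ ≤ _ := pow_le_pow_left₀ (Real.exp_pos _).le hy1 _
    · have : badF S = ∅ := by
        ext ω; simp [hbF, h3]
      rw [this, measureReal_empty, mul_zero]
      exact pow_nonneg hy0 _
  have hB : μ.real (⋃ S ∈ Finset.univ.filter (fun S : Finset (Fin n) => 0 < S.card), badB S) ≤
      2 * y := by
    apply union_bound μ n hcard badB y hy0 hy
    intro S hS
    by_cases hk : ∃ k, n < 3 * k ∧ 2 * k ≤ n ∧ S.card = n - 2 * k + 1
    · obtain ⟨k, hk3, hk2, hmk⟩ := hk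
      have hmin : ∀ j, S.card ≤ j → j < n - k + 1 →
          (S.card : ℝ) * ((n : ℝ) - S.card) ≤ j * ((n : ℝ) - j) := by
        intro j hj1 hj2
        have e1 : (S.card : ℝ) ≤ j := by exact_mod_cast hj1
        have e2 : (j : ℝ) + S.card ≤ n := by
          have : j + S.card ≤ n := by omega
          exact_mod_cast this
        nlinarith
      have ht := model_tail (V := Fin n) r (slotB h M) (slotB_meas h M) M hM0 h
        (slotB_disj h h0 M _) (slotB_unif h h0 M hM) h0 hM n S.card (n - k + 1) hcard hS
        (by omega) (by omega) hmin ε hε0 hε1 hκn S rfl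
      rw [hA2] at ht
      have hsub : μ.real (badB S) ≤
          μ.real {ω | (grow (hasLab (slotB h M)) ω S M).card < n - k + 1} := by
        refine measureReal_mono ?_
        rintro ω ⟨k', a1, a2, a3, a4⟩
        have : k' = k := by omega
        subst this
        exact a4
      calc _ ≤ (n.choose S.card : ℝ) * (wt n S.card (n - k + 1) ε *
            Real.exp (-(2 * A * Real.log n / n * (S.card * ((n : ℝ) - S.card))))) :=
            mul_le_mul_of_nonneg_left (hsub.trans ht) (Nat.cast_nonneg _)
        _ ≤ _ := est_B n S.card k hn2 hk3 hk2 hmk ε A γ δ hε0 hε1 hγ hA hδ0 hAδ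
        _ ≤ _ := pow_le_pow_left₀ (le_max_of_le_left (Real.exp_pos _).le) (max_le hy2 hy3) _
    · have : badB S = ∅ := by
        ext ω
        simp only [hbB, Set.mem_setOf_eq, Set.mem_empty_iff_false, iff_false]
        rintro ⟨k, a1, a2, a3, -⟩
        exact hk ⟨k, a1, a2, a3⟩
      rw [this, measureReal_empty, mul_zero]
      exact pow_nonneg hy0 _
  have hsub : {ω | ¬ doubleAll (orderDisc ω) ≤ ENNReal.ofReal X} ⊆
      {ω : Sym2 (Fin n) → LabelSpace | ¬ (rank ω (M * h) : ℝ) ≤ X} ∪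
      ((⋃ S ∈ Finset.univ.filter (fun S : Finset (Fin n) => 0 < S.card), badF S) ∪
        ⋃ S ∈ Finset.univ.filter (fun S : Finset (Fin n) => 0 < S.card), badB S) := by
    intro ω hω
    by_contra hcon
    simp only [Set.mem_union, Set.mem_setOf_eq, not_or, not_not, Set.mem_iUnion,
      Finset.mem_filter, Finset.mem_univ, true_and, not_exists] at hcon
    obtain ⟨c1, c2, c3⟩ := hcon
    apply hω
    apply doubleAll_le n hcard ω h h0 M X c1
    · intro S hS h3
      by_contra hlt
      exact c2 S hS ⟨h3, not_le.1 hlt⟩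
    · intro k hk3 hk2 U hU
      by_contra hlt
      exact c3 U (by omega) ⟨k, hk3, hk2, hU, not_le.1 hlt⟩
  have u1 := measureReal_mono (μ := μ) hsub
  have u2 := measureReal_union_le (μ := μ) {ω : Sym2 (Fin n) → LabelSpace | ¬ (rank ω (M * h) : ℝ) ≤ X}
      ((⋃ S ∈ Finset.univ.filter (fun S : Finset (Fin n) => 0 < S.card), badF S) ∪
        ⋃ S ∈ Finset.univ.filter (fun S : Finset (Fin n) => 0 < S.card), badB S)
  have u3 := measureReal_union_le (μ := μ)
      (⋃ S ∈ Finset.univ.filter (fun S : Finset (Fin n) => 0 < S.card), badF S)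
      (⋃ S ∈ Finset.univ.filter (fun S : Finset (Fin n) => 0 < S.card), badB S)
  linarith

lemma rank_bound (r n : ℕ) (hr : 0 < r) (hn2 : 2 ≤ n) (γ t : ℝ) (hγ : 0 < γ)
    (ht : t = 2 * (1 + γ) * Real.log n / (r * n)) (ht1 : t ≤ 1) :
    ∃ D : ℝ, D = γ / 2 / (1 + γ) * (γ / 2) / (1 + γ / 2 / (1 + γ)) ∧
    (contModel (Fin n) (Measure.dirac r)).real
      {ω | ¬ (rank ω t : ℝ) ≤ (1 + 2 * γ) * n * Real.log n} ≤ Real.exp (-(D * Real.log n)) := by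
  refine ⟨_, rfl, ?_⟩
  set u : ℝ := γ / 2 / (1 + γ) with hu
  have hu0 : 0 < u := by positivity
  have hrR : (0 : ℝ) < r := by exact_mod_cast hr
  have hnR : (0 : ℝ) < n := by
    have : 0 < n := by omega
    exact_mod_cast this
  have hn1 : (1 : ℝ) ≤ n := by
    have : 1 ≤ n := by omega
    exact_mod_cast this
  have hlog : 0 ≤ Real.log n := Real.log_natCast_nonneg n
  have ht0 : 0 ≤ t := by rw [ht]; positivity
  refine (rank_tail (V := Fin n) r (1 + u) t _ ht0 ht1 (by linarith)).trans ?_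
  rw [Fintype.card_fin, Real.rpow_def_of_pos (by linarith)]
  have e1 : (1 + (1 + u - 1) * t) ^ (r * n.choose 2) ≤ Real.exp ((r * n.choose 2 : ℕ) * (u * t)) := by
    rw [Real.exp_nat_mul]
    apply pow_le_pow_left₀ (by nlinarith [mul_nonneg hu0.le ht0])
    have := Real.add_one_le_exp (u * t)
    linarith
  have e2 : ((r * n.choose 2 : ℕ) : ℝ) * (u * t) ≤ u * ((1 + γ) * n * Real.log n) := by
    have hch : ((n.choose 2 : ℕ) : ℝ) ≤ (n : ℝ) ^ 2 / 2 := by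
      rw [Nat.cast_choose_two]
      nlinarith
    push_cast
    calc (r : ℝ) * (n.choose 2 : ℝ) * (u * t) ≤ r * ((n : ℝ) ^ 2 / 2) * (u * t) := by gcongr
      _ = _ := by rw [ht]; field_simp
  have e3 : u / (1 + u) ≤ Real.log (1 + u) := by
    have := Real.one_sub_inv_le_log_of_pos (x := 1 + u) (by linarith)
    have h2 : 1 - (1 + u)⁻¹ = u / (1 + u) := by field_simp; ring
    linarith
  calc _ ≤ Real.exp (Real.log (1 + u) * -((1 + 2 * γ) * n * Real.log n)) *
        Real.exp ((r * n.choose 2 : ℕ) * (u * t)) :=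
        mul_le_mul_of_nonneg_left e1 (Real.exp_pos _).le
    _ = Real.exp (Real.log (1 + u) * -((1 + 2 * γ) * n * Real.log n) +
        (r * n.choose 2 : ℕ) * (u * t)) := (Real.exp_add _ _).symm
    _ ≤ _ := by
      apply Real.exp_le_exp.2
      have hnl : 0 ≤ (n : ℝ) * Real.log n := by positivity
      have f1 : u / (1 + u) * ((1 + 2 * γ) * n * Real.log n) ≤
          Real.log (1 + u) * ((1 + 2 * γ) * n * Real.log n) :=
        mul_le_mul_of_nonneg_right e3 (by positivity)
      have f2 : u * ((1 + γ) * n * Real.log n) =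
          u / (1 + u) * ((1 + 3 / 2 * γ) * n * Real.log n) := by
        have : 1 + 3 / 2 * γ = (1 + u) * (1 + γ) := by
          rw [hu]; field_simp; ring
        rw [this]; field_simp
      have f3 : u * (γ / 2) / (1 + u) * Real.log n ≤
          u / (1 + u) * (γ / 2) * (n * Real.log n) := by
        rw [show u * (γ / 2) / (1 + u) = u / (1 + u) * (γ / 2) by ring]
        apply mul_le_mul_of_nonneg_left _ (by positivity)
        nlinarith
      have f4 : u / (1 + u) * ((1 + 2 * γ) * n * Real.log n) -
          u / (1 + u) * ((1 + 3 / 2 * γ) * n * Real.log n) =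
          u / (1 + u) * (γ / 2) * (n * Real.log n) := by ring
      linarith

lemma tendsto_exp_sub_log (a c : ℝ) (hc : 0 < c) :
    Tendsto (fun n : ℕ => Real.exp (a - c * Real.log n)) atTop (𝓝 0) := by
  apply Real.tendsto_exp_atBot.comp
  apply tendsto_atBot_add_const_left atTop a
  apply tendsto_neg_atTop_atBot.comp
  exact (Real.tendsto_log_atTop.comp tendsto_natCast_atTop_atTop).const_mul_atTop hc

lemma real_fail_tendsto (r : ℕ) (hr : 0 < r) (γ : ℝ) (hγ : 0 < γ) :
    Tendsto (fun n : ℕ => (contModel (Fin n) (Measure.dirac r)).real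
      {ω | ¬ doubleAll (orderDisc ω) ≤ ENNReal.ofReal ((1 + 2 * γ) * n * Real.log n)})
      atTop (𝓝 0) := by
  have hrR : (0 : ℝ) < r := by exact_mod_cast hr
  set ε : ℝ := γ / (4 * (1 + γ)) with hε
  have hε0 : 0 < ε := by positivity
  have hε1 : ε < 1 := by rw [hε, div_lt_one (by positivity)]; linarith
  set A : ℝ := (1 - ε) ^ 2 * (1 + γ) with hA
  have hεγ : ε * (1 + γ) = γ / 4 := by rw [hε]; field_simp
  have hA1 : 1 + γ / 2 ≤ A := by
    have : A = (1 + γ) - 2 * (ε * (1 + γ)) + ε ^ 2 * (1 + γ) := by rw [hA]; ring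
    rw [this, hεγ]
    have : 0 ≤ ε ^ 2 * (1 + γ) := by positivity
    linarith
  set δ : ℝ := (γ / 4) / (1 + γ / 2) with hδ
  have hδ0 : 0 < δ := by positivity
  have hδ1 : δ ≤ 1 := by rw [hδ, div_le_one (by positivity)]; linarith
  have hAδ : 1 + γ / 4 ≤ A * (1 - δ) := by
    calc 1 + γ / 4 = (1 + γ / 2) * (1 - δ) := by rw [hδ]; field_simp; ring
      _ ≤ _ := mul_le_mul_of_nonneg_right hA1 (by linarith)
  set D : ℝ := γ / 2 / (1 + γ) * (γ / 2) / (1 + γ / 2 / (1 + γ)) with hD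
  have hD0 : 0 < D := by positivity
  set y : ℕ → ℝ := fun n => Real.exp (Real.log ε⁻¹ - 1 / 3 * Real.log n) +
    Real.exp (4 + 18 / ε - 2 * (γ / 4) * Real.log n) +
    Real.exp (Real.log (2 * ε⁻¹) / δ - 1 * Real.log n) with hy
  have hyt : Tendsto y atTop (𝓝 0) := by
    have := ((tendsto_exp_sub_log (Real.log ε⁻¹) (1 / 3) (by norm_num)).add
      (tendsto_exp_sub_log (4 + 18 / ε) (2 * (γ / 4)) (by positivity))).add
      (tendsto_exp_sub_log (Real.log (2 * ε⁻¹) / δ) 1 (by norm_num))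
    simpa [hy] using this
  have hub : Tendsto (fun n : ℕ => Real.exp (0 - D * Real.log n) + 4 * y n) atTop (𝓝 0) := by
    simpa using (tendsto_exp_sub_log 0 D hD0).add (hyt.const_mul 4)
  have htt : Tendsto (fun n : ℕ => 2 * (1 + γ) * Real.log n / (r * n)) atTop (𝓝 0) := by
    have h1 : Tendsto (fun n : ℕ => Real.log n / n) atTop (𝓝 0) :=
      (Real.isLittleO_log_id_atTop.tendsto_div_nhds_zero).comp tendsto_natCast_atTop_atTop
    have h2 := h1.const_mul (2 * (1 + γ) / r)
    rw [mul_zero] at h2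
    refine h2.congr fun n => ?_
    rw [div_mul_div_comm]
  refine squeeze_zero' (Eventually.of_forall fun n => measureReal_nonneg) ?_ hub
  filter_upwards [eventually_ge_atTop 2, htt.eventually_le_const (show (0 : ℝ) < 1 by norm_num),
    hyt.eventually_le_const (show (0 : ℝ) < 1 / 2 by norm_num)] with n hn2 ht1 hyn
  have hnR : (0 : ℝ) < n := by
    have : 0 < n := by omega
    exact_mod_cast this
  have hlog : 0 ≤ Real.log n := Real.log_natCast_nonneg n
  set t : ℝ := 2 * (1 + γ) * Real.log n / (r * n) with ht
  have ht0 : 0 ≤ t := by positivity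
  set M : ℕ := ⌈r * t * (n : ℝ) ^ 2 / ε⌉₊ + 1 with hM
  have hM0 : 0 < M := Nat.succ_pos _
  have hMR : (0 : ℝ) < M := by exact_mod_cast hM0
  have hMh : M * (t / M) = t := by field_simp
  have hMle : r * t * (n : ℝ) ^ 2 / ε ≤ M := by
    have := Nat.le_ceil (r * t * (n : ℝ) ^ 2 / ε)
    rw [hM]; push_cast; linarith
  have hκ : r * (t / M) * (n : ℝ) ^ 2 ≤ ε := by
    rw [show r * (t / M) * (n : ℝ) ^ 2 = r * t * (n : ℝ) ^ 2 / M by ring, div_le_iff₀ hMR]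
    rw [div_le_iff₀ hε0] at hMle
    linarith
  have hA2 : (1 - ε) ^ 2 * (r * (t / M) * M) = 2 * A * Real.log n / n := by
    rw [show r * (t / M) * M = r * (M * (t / M)) by ring, hMh, ht, hA]
    field_simp
  have p1 := Real.exp_pos (Real.log ε⁻¹ - 1 / 3 * Real.log n)
  have p2 := Real.exp_pos (4 + 18 / ε - 2 * (γ / 4) * Real.log n)
  have p3 := Real.exp_pos (Real.log (2 * ε⁻¹) / δ - 1 * Real.log n)
  have hfb := fail_bound r n M hn2 hM0 (t / M) ε A (γ / 4) δ (y n) ((1 + 2 * γ) * n * Real.log n)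
    (by positivity) (by rw [hMh]; exact ht1) hε0 hε1 (by positivity) (by linarith) hδ0 hAδ hκ hA2
    (by
      rw [show Real.log ε⁻¹ - Real.log n / 3 = Real.log ε⁻¹ - 1 / 3 * Real.log n by ring]
      simp only [hy]; linarith)
    (by simp only [hy]; linarith)
    (by
      rw [show Real.log (2 * ε⁻¹) / δ - Real.log n =
        Real.log (2 * ε⁻¹) / δ - 1 * Real.log n by ring]
      simp only [hy]; linarith) hyn
  rw [hMh] at hfb
  obtain ⟨D', hD', hrb⟩ := rank_bound r n hr hn2 γ t hγ ht ht1
  rw [← hD] at hD'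
  rw [hD'] at hrb
  rw [zero_sub]
  linarith

lemma main_tendsto (r : ℕ) (hr : 0 < r) (β : ℝ) (hβ : 0 < β) :
    Tendsto (fun n : ℕ =>
        contModel (Fin n) (Measure.dirac r) {ω |
          doubleAll (orderDisc ω) ≤ ENNReal.ofReal ((1 + β) * n * Real.log n)})
      atTop (𝓝 1) := by
  have h1 := real_fail_tendsto r hr (β / 2) (by positivity)
  rw [show 1 + 2 * (β / 2) = 1 + β by ring] at h1
  have h2 : Tendsto (fun n : ℕ => (contModel (Fin n) (Measure.dirac r)).real {ω |
      doubleAll (orderDisc ω) ≤ ENNReal.ofReal ((1 + β) * n * Real.log n)}) atTop (𝓝 1) := by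
    have h3 := h1.const_sub 1
    rw [sub_zero] at h3
    refine tendsto_of_tendsto_of_tendsto_of_le_of_le h3 tendsto_const_nhds ?_ ?_
    · intro n
      have := measureReal_union_le (μ := contModel (Fin n) (Measure.dirac r))
        {ω | doubleAll (orderDisc ω) ≤ ENNReal.ofReal ((1 + β) * n * Real.log n)}
        {ω | ¬ doubleAll (orderDisc ω) ≤ ENNReal.ofReal ((1 + β) * n * Real.log n)}
      have hun : {ω : Sym2 (Fin n) → LabelSpace |
          doubleAll (orderDisc ω) ≤ ENNReal.ofReal ((1 + β) * n * Real.log n)} ∪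
          {ω | ¬ doubleAll (orderDisc ω) ≤ ENNReal.ofReal ((1 + β) * n * Real.log n)} =
          Set.univ := by
        ext ω; simp only [Set.mem_union, Set.mem_setOf_eq, Set.mem_univ, iff_true]; exact em _
      rw [hun, probReal_univ] at this
      simp only
      linarith
    · intro n
      exact measureReal_le_one
  have h4 := (ENNReal.continuous_ofReal.tendsto 1).comp h2
  rw [ENNReal.ofReal_one] at h4
  refine h4.congr fun n => ?_
  exact ofReal_measureReal (measure_ne_top _ _)

/-- Upper bound for the doubling time of the order discretization of
`Γ_{[n]}(ψ)` with `ψ` degenerate at `r`: with high probability it is at most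
`(1+β)·n·log n`. -/
theorem statement18 (r : ℕ) (hr : 0 < r) (β : ℝ) (hβ : 0 < β) :
    Tendsto (fun n : ℕ =>
        contModel (Fin n) (Measure.dirac r) {ω |
          doubleAll (orderDisc ω) ≤ ENNReal.ofReal ((1 + β) * n * Real.log n)})
      atTop (𝓝 1) := by
  exact main_tendsto r hr β hβ

end RTG
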